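/- arXiv:2509.03048 — 2 statements merged into one kernel-verified Lean document; each statement's English description precedes it below -/
import Mathlib

section
/- For the elephant random walk with memory parameter p ∈ [0, 1) on a Cayley graph that is the d-regular tree T_d (d ≥ 3): if p ≤ p_d there exists C > 0 such that E|Δ_n/n − (d − 2)/d|^2 ≤ C · r_n^{−2} · log n for all n ≥ 2, and if p > p_d there exists C > 0 such that E|Δ_n/n − (d − 2)/d|^2 ≤ C · r_n^{−2} for all n ≥ 1, where r_n = n^{1/2} if p < p_d, r_n = (n / log n)^{1/2} if p = p_d, and r_n = n^{d(1−p)/(d−1)} if p > p_d, with p_d = (d + 1)/(2d). -/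
open MeasureTheory ProbabilityTheory Filter

noncomputable section

/-- The Cayley graph of a group with respect to a finite set of generators. -/
def cayleyGraph {G : Type*} [Group G] (S : Finset G) : SimpleGraph G where
  Adj x y := x ≠ y ∧ (y * x⁻¹ ∈ S ∨ x * y⁻¹ ∈ S)
  symm := by
    refine ⟨?_⟩
    rintro x y ⟨h1, h2⟩
    refine ⟨h1.symm, ?_⟩
    rcases h2 with h | h
    · exact Or.inr h
    · exact Or.inl h
  loopless := ⟨fun x h => h.1 rfl⟩

/-- The elephant random walk (ERW) with memory parameter `p` on the Cayley graph of a
group `G` with respect to a symmetric generating set `S` of cardinality `d`, not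
containing the identity, whose Cayley graph is a tree (hence the `d`-regular tree
`T_d`).  The steps are `g 1, g 2, …` (the value of `g 0` is irrelevant).  The law of
the process is characterised by: `g 1` is uniform on `S`, and, conditionally on the
first `n` steps being `s 1, …, s n`, the next step `g (n+1)` equals `a ∈ S` with
probability `p * N/n + ((1-p)/(d-1)) * (n-N)/n`, where `N = #{1 ≤ k ≤ n : s k = a}`;
this is precisely the probability that the walker, recalling a uniform past epoch
`D ∈ {1, …, n}`, repeats `g D` with probability `p` and takes any given other step
with probability `(1-p)/(d-1)`. -/
structure ERW (G : Type*) [Group G] [DecidableEq G] (d : ℕ) (p : ℝ)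
    (Ω : Type*) [MeasurableSpace Ω] (P : Measure Ω) where
  S : Finset G
  card_S : S.card = d
  symm_S : ∀ s ∈ S, s⁻¹ ∈ S
  one_not_mem : (1 : G) ∉ S
  tree : (cayleyGraph S).IsTree
  g : ℕ → Ω → G
  meas_g : ∀ n a, MeasurableSet {ω | g n ω = a}
  mem_S : ∀ n, 1 ≤ n → ∀ ω, g n ω ∈ S
  init : ∀ a ∈ S, (P {ω | g 1 ω = a}).toReal = 1 / d
  update : ∀ n, 1 ≤ n → ∀ s : ℕ → G, ∀ a ∈ S,
    (P ({ω | ∀ k ∈ Finset.Icc 1 n, g k ω = s k} ∩ {ω | g (n + 1) ω = a})).toReal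
      = (p * ((((Finset.Icc 1 n).filter fun k => s k = a).card : ℝ) / n)
          + (1 - p) / ((d : ℝ) - 1)
            * (((n : ℝ) - (((Finset.Icc 1 n).filter fun k => s k = a).card : ℝ)) / n))
        * (P {ω | ∀ k ∈ Finset.Icc 1 n, g k ω = s k}).toReal

namespace ERW

variable {G : Type*} [Group G] [DecidableEq G] {d : ℕ} {p : ℝ}
  {Ω : Type*} [MeasurableSpace Ω] {P : Measure Ω}

/-- The position `w n = g n ⋯ g 1` of the walk at time `n`. -/
def pos (E : ERW G d p Ω P) : ℕ → Ω → G
  | 0 => fun _ => 1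
  | n + 1 => fun ω => E.g (n + 1) ω * E.pos n ω

/-- `Δ n`: the (word-metric) distance of the walker from the root at time `n`. -/
def dist (E : ERW G d p Ω P) (n : ℕ) (ω : Ω) : ℕ :=
  (cayleyGraph E.S).dist 1 (E.pos n ω)

/-- `N n a`: the number of `a`-steps taken by time `n`. -/
def count (E : ERW G d p Ω P) (a : G) (n : ℕ) (ω : Ω) : ℕ :=
  ((Finset.Icc 1 n).filter fun k => E.g k ω = a).card

/-- `γ n`: the unique step decreasing the distance to the root by 1
(a junk value if the walker is at the root). -/
def gammaStep (E : ERW G d p Ω P) (n : ℕ) (ω : Ω) : G :=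
  @Classical.epsilon G ⟨1⟩ fun s =>
    s ∈ E.S ∧ (cayleyGraph E.S).dist 1 (s * E.pos n ω) + 1 = E.dist n ω

/-- `ℓ n = N n (γ n)` if the walker is away from the root, and `0` otherwise. -/
def ell (E : ERW G d p Ω P) (n : ℕ) (ω : Ω) : ℕ :=
  if E.pos n ω = 1 then 0 else E.count (E.gammaStep n ω) n ω

/-- `Ξ n = (1/n) ∑_{k=0}^{n-1} (ℓ k / k - 1(Δ k > 0)/d)` (with the convention
`ℓ 0 / 0 = 0`, automatic since division by zero yields zero). -/
def Xi (E : ERW G d p Ω P) (n : ℕ) (ω : Ω) : ℝ :=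
  (1 / n) * ∑ k ∈ Finset.range n,
    ((E.ell k ω : ℝ) / k - (if 0 < E.dist k ω then 1 else 0) / d)

/-- The natural filtration `F n` generated by the steps up to time `n`. -/
def filt (E : ERW G d p Ω P) (n : ℕ) : MeasurableSpace Ω :=
  ⨆ k ∈ Finset.Icc 1 n, MeasurableSpace.comap (E.g k) ⊤

/-- `G n = E[Δ (n+1) - Δ n | F n]`. -/
def drift (E : ERW G d p Ω P) (n : ℕ) : Ω → ℝ :=
  P[fun ω => ((E.dist (n + 1) ω : ℝ) - (E.dist n ω : ℝ)) | E.filt n]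

/-- The martingale differences `Y k = Δ k - Δ (k-1) - G (k-1)`. -/
def mdiff (E : ERW G d p Ω P) (k : ℕ) (ω : Ω) : ℝ :=
  (E.dist k ω : ℝ) - (E.dist (k - 1) ω : ℝ) - E.drift (k - 1) ω

/-- The martingale `M n = ∑_{k=1}^n Y k`. -/
def mart (E : ERW G d p Ω P) (n : ℕ) (ω : Ω) : ℝ :=
  ∑ k ∈ Finset.Icc 1 n, E.mdiff k ω

end ERW

/-- The rate `r n`: `√n` in the subcritical regime `p < p_d = (d+1)/(2d)`,
`√(n / log n)` in the critical regime `p = p_d`, and `n ^ (d(1-p)/(d-1))` in the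
supercritical regime `p > p_d`. -/
def rate (p : ℝ) (d : ℕ) (n : ℕ) : ℝ :=
  if p < ((d : ℝ) + 1) / (2 * d) then Real.sqrt n
  else if p = ((d : ℝ) + 1) / (2 * d) then Real.sqrt ((n : ℝ) / Real.log n)
  else (n : ℝ) ^ ((d : ℝ) * (1 - p) / ((d : ℝ) - 1))


lemma erw_step_exists {G : Type*} [Group G] [DecidableEq G] {S : Finset G}
    (hsymm : ∀ s ∈ S, s⁻¹ ∈ S) (h1 : (1 : G) ∉ S) (ht : (cayleyGraph S).IsTree) :
    ∃ γ : G → G, γ 1 = 1 ∧ (∀ x, x ≠ 1 → γ x ∈ S) ∧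
      ∀ x, ∀ s ∈ S, (cayleyGraph S).dist 1 (s * x) + 2 * (if s = γ x then 1 else 0)
        = (cayleyGraph S).dist 1 x + 1 := by
  have hadj : ∀ x, ∀ s ∈ S, (cayleyGraph S).Adj x (s * x) := by
    intro x s hs
    refine ⟨?_, Or.inl (by simpa using hs)⟩
    intro h
    have : s = 1 := by simpa using h
    exact h1 (this ▸ hs)
  have hadj2 : ∀ x y, (cayleyGraph S).Adj x y → ∃ s ∈ S, y = s * x := by
    intro x y h
    refine ⟨y * x⁻¹, ?_, by simp⟩
    rcases h.2 with h | h
    · exact h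
    · simpa using hsymm _ h
  have hex : ∀ x, x ≠ 1 → ∃ s ∈ S, (cayleyGraph S).dist 1 (s * x) + 1 = (cayleyGraph S).dist 1 x := by
    intro x hx
    obtain ⟨q, hq⟩ := ht.connected.exists_walk_length_eq_dist x 1
    cases q with
    | nil => exact absurd rfl hx
    | @cons _ y _ h q' =>
      obtain ⟨s, hs, rfl⟩ := hadj2 _ _ h
      refine ⟨s, hs, ?_⟩
      have h3 := SimpleGraph.dist_le q'
      simp only [SimpleGraph.Walk.length_cons] at hq
      have h4 := ht.dist_eq_dist_add_one_of_adj 1 (hadj x s hs)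
      rw [SimpleGraph.dist_comm (u := x)] at hq
      rw [SimpleGraph.dist_comm (v := 1)] at h3
      omega
  have huniq : ∀ x y z, (cayleyGraph S).Adj x y → (cayleyGraph S).Adj x z →
      (cayleyGraph S).dist 1 y + 1 = (cayleyGraph S).dist 1 x →
      (cayleyGraph S).dist 1 z + 1 = (cayleyGraph S).dist 1 x → y = z := by
    intro x y z hy hz hdy hdz
    obtain ⟨q, hq⟩ := ht.connected.exists_walk_length_eq_dist y 1
    obtain ⟨r, hr⟩ := ht.connected.exists_walk_length_eq_dist z 1
    have h5 : (SimpleGraph.Walk.cons hy q).IsPath := by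
      apply SimpleGraph.Walk.isPath_of_length_eq_dist
      rw [SimpleGraph.Walk.length_cons, hq, SimpleGraph.dist_comm (u := y),
        SimpleGraph.dist_comm (u := x), hdy]
    have h6 : (SimpleGraph.Walk.cons hz r).IsPath := by
      apply SimpleGraph.Walk.isPath_of_length_eq_dist
      rw [SimpleGraph.Walk.length_cons, hr, SimpleGraph.dist_comm (u := z),
        SimpleGraph.dist_comm (u := x), hdz]
    have h7 := (ht.isAcyclic.subsingleton_path x 1).elim ⟨_, h5⟩ ⟨_, h6⟩
    have h8 := congrArg (fun w : (cayleyGraph S).Path x 1 => w.1.snd) h7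
    simpa using h8
  choose! γ hγ1 hγ2 using hex
  refine ⟨fun x => if x = 1 then 1 else γ x, by simp, ?_, ?_⟩
  · intro x hx
    simpa [hx] using hγ1 x hx
  · intro x s hs
    by_cases hx : x = 1
    · subst hx
      have : s ≠ 1 := fun h => h1 (h ▸ hs)
      simp only [if_true, this, if_false]
      have h9 := SimpleGraph.dist_eq_one_iff_adj.2 (hadj 1 s hs)
      simp [SimpleGraph.dist_self] at h9 ⊢
      exact h9
    · simp only [hx, if_false]
      split_ifs with h
      · have := hγ2 x hx
        rw [← h] at this
        omega
      · rcases ht.dist_eq_dist_add_one_of_adj 1 (hadj x s hs) with h4 | h4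
        · exfalso
          apply h
          have := huniq x _ _ (hadj x s hs) (hadj x _ (hγ1 x hx)) h4.symm (hγ2 x hx)
          simpa using this
        · omega

namespace ERW

section Prob

variable {G : Type*} [Group G] [DecidableEq G] {d : ℕ} {p : ℝ}
  {Ω : Type*} [MeasurableSpace Ω] {P : Measure Ω}

/-- `F` depends only on the first `n` steps. -/
def Dep (E : ERW G d p Ω P) {β : Type*} (n : ℕ) (F : Ω → β) : Prop :=
  ∀ ω ω', (∀ k ∈ Finset.Icc 1 n, E.g k ω = E.g k ω') → F ω = F ω'

def hist (E : ERW G d p Ω P) (n : ℕ) (ω : Ω) : (Finset.Icc 1 n) → E.S :=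
  fun k => ⟨E.g k ω, E.mem_S k (Finset.mem_Icc.1 k.2).1 ω⟩

lemma hist_eq_iff (E : ERW G d p Ω P) (n : ℕ) (ω ω' : Ω) :
    E.hist n ω = E.hist n ω' ↔ ∀ k ∈ Finset.Icc 1 n, E.g k ω = E.g k ω' := by
  constructor
  · intro h k hk
    have := congrFun h ⟨k, hk⟩
    simpa [hist] using this
  · intro h
    funext k
    simp only [hist, Subtype.mk.injEq]
    exact h k k.2

lemma meas_cell (E : ERW G d p Ω P) (n : ℕ) (s : (Finset.Icc 1 n) → E.S) :
    MeasurableSet {ω | E.hist n ω = s} := by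
  have : {ω | E.hist n ω = s} = ⋂ k : Finset.Icc 1 n, {ω | E.g k ω = s k} := by
    ext ω
    simp only [Set.mem_ofPred_eq, Set.mem_iInter, funext_iff, hist, Subtype.ext_iff]
  rw [this]
  exact MeasurableSet.iInter fun k => E.meas_g _ _

lemma Dep.exists_eq {E : ERW G d p Ω P} {n : ℕ} {F : Ω → ℝ} (h : E.Dep n F) :
    ∃ f : ((Finset.Icc 1 n) → E.S) → ℝ, ∀ ω, F ω = ∑ s,
      f s * Set.indicator {ω | E.hist n ω = s} (fun _ => (1 : ℝ)) ω := by
  classical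
  have hf : Function.FactorsThrough F (E.hist n) := fun ω ω' hh =>
    h ω ω' ((E.hist_eq_iff n ω ω').1 hh)
  refine ⟨Function.extend (E.hist n) F 0, fun ω => ?_⟩
  rw [Finset.sum_eq_single (E.hist n ω)]
  · simp [hf.extend_apply]
  · intro s _ hs
    simp [hs.symm]
  · simp

lemma Dep.integrable [IsProbabilityMeasure P] {E : ERW G d p Ω P} {n : ℕ} {F : Ω → ℝ}
    (h : E.Dep n F) : Integrable F P := by
  obtain ⟨f, hf⟩ := h.exists_eq
  rw [funext hf]
  refine integrable_finsetSum _ fun s _ => ?_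
  exact ((integrable_const (1 : ℝ)).indicator (E.meas_cell n s)).const_mul _

lemma Dep.mono {E : ERW G d p Ω P} {β : Type*} {n m : ℕ} {F : Ω → β} (h : E.Dep n F)
    (hnm : n ≤ m) : E.Dep m F := fun ω ω' hh =>
  h ω ω' fun k hk => hh k (Finset.Icc_subset_Icc_right hnm hk)

lemma dep_pos (E : ERW G d p Ω P) (n : ℕ) : E.Dep n (E.pos n) := by
  induction n with
  | zero => intro ω ω' _; rfl
  | succ n ih =>
    intro ω ω' h
    simp only [pos]
    rw [h (n + 1) (by simp), ih.mono (Nat.le_succ n) ω ω' h]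

lemma dep_count (E : ERW G d p Ω P) (n : ℕ) : E.Dep n (fun ω a => E.count a n ω) := by
  intro ω ω' h
  funext a
  simp only [count]
  congr 1
  apply Finset.filter_congr
  intro k hk
  rw [h k hk]

/-- The conditional probability of step `a`. -/
def q (E : ERW G d p Ω P) (n : ℕ) (a : G) (ω : Ω) : ℝ :=
  p * ((E.count a n ω : ℝ) / n) + (1 - p) / ((d : ℝ) - 1) * (((n : ℝ) - E.count a n ω) / n)

lemma dep_q (E : ERW G d p Ω P) (n : ℕ) : E.Dep n (fun ω a => E.q n a ω) := by
  intro ω ω' h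
  funext a
  have := congrFun (E.dep_count n ω ω' h) a
  simp only at this
  simp only [q, this]

lemma integral_step [IsProbabilityMeasure P] (E : ERW G d p Ω P) {n : ℕ} (hn : 1 ≤ n)
    {F : Ω → ℝ} (hF : E.Dep n F) {a : G} (ha : a ∈ E.S) :
    ∫ ω, F ω * (if E.g (n + 1) ω = a then 1 else 0) ∂P = ∫ ω, F ω * E.q n a ω ∂P := by
  classical
  obtain ⟨f, hf⟩ := hF.exists_eq
  have key : ∀ s : (Finset.Icc 1 n) → E.S,
      Integrable (fun ω => Set.indicator {ω | E.hist n ω = s} (fun _ => (1 : ℝ)) ω *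
        (if E.g (n + 1) ω = a then 1 else 0)) P ∧
      Integrable (fun ω => Set.indicator {ω | E.hist n ω = s} (fun _ => (1 : ℝ)) ω * E.q n a ω) P ∧
      ∫ ω, Set.indicator {ω | E.hist n ω = s} (fun _ => (1 : ℝ)) ω *
        (if E.g (n + 1) ω = a then 1 else 0) ∂P =
      ∫ ω, Set.indicator {ω | E.hist n ω = s} (fun _ => (1 : ℝ)) ω * E.q n a ω ∂P := by
    intro s
    have e1 : (fun ω => Set.indicator {ω | E.hist n ω = s} (fun _ => (1 : ℝ)) ω *
        (if E.g (n + 1) ω = a then 1 else 0)) =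
        Set.indicator ({ω | E.hist n ω = s} ∩ {ω | E.g (n + 1) ω = a}) (fun _ => (1 : ℝ)) := by
      funext ω
      by_cases h1 : E.hist n ω = s <;> by_cases h2 : E.g (n + 1) ω = a <;>
        simp [Set.indicator, h1, h2]
    have hm := (E.meas_cell n s).inter (E.meas_g (n + 1) a)
    by_cases hs : ∃ ω₀, E.hist n ω₀ = s
    · obtain ⟨ω₀, rfl⟩ := hs
      have e2 : (fun ω => Set.indicator {ω | E.hist n ω = E.hist n ω₀} (fun _ => (1 : ℝ)) ω *
          E.q n a ω) = fun ω => E.q n a ω₀ *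
          Set.indicator {ω | E.hist n ω = E.hist n ω₀} (fun _ => (1 : ℝ)) ω := by
        funext ω
        by_cases h1 : E.hist n ω = E.hist n ω₀
        · have := congrFun (E.dep_q n ω ω₀ ((E.hist_eq_iff n ω ω₀).1 h1)) a
          simp only at this
          simp [Set.indicator, h1, this]
        · simp [Set.indicator, h1]
      have e3 : {ω | E.hist n ω = E.hist n ω₀} =
          {ω | ∀ k ∈ Finset.Icc 1 n, E.g k ω = E.g k ω₀} := by
        ext ω
        exact E.hist_eq_iff n ω ω₀
      rw [e1, e2]
      refine ⟨(integrable_const (1 : ℝ)).indicator hm,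
        ((integrable_const (1 : ℝ)).indicator (E.meas_cell n _)).const_mul _, ?_⟩
      rw [integral_const_mul, integral_indicator hm, integral_indicator (E.meas_cell n _)]
      simp only [integral_const, smul_eq_mul, mul_one, measureReal_restrict_apply_univ]
      rw [e3]
      exact E.update n hn (fun k => E.g k ω₀) a ha
    · have e4 : ∀ ω, Set.indicator {ω | E.hist n ω = s} (fun _ => (1 : ℝ)) ω = 0 := by
        intro ω
        have : ¬ E.hist n ω = s := fun h => hs ⟨ω, h⟩
        simp [this]
      simp [e4]
  simp only [hf, Finset.sum_mul, mul_assoc]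
  rw [integral_finsetSum _ fun s _ => (key s).1.const_mul _,
    integral_finsetSum _ fun s _ => (key s).2.1.const_mul _]
  refine Finset.sum_congr rfl fun s _ => ?_
  rw [integral_const_mul, integral_const_mul, (key s).2.2]

end Prob

end ERW

namespace ERW

section Prob2

variable {G : Type*} [Group G] [DecidableEq G] {d : ℕ} {p : ℝ}
  {Ω : Type*} [MeasurableSpace Ω] {P : Measure Ω}

lemma integral_comb_aux [IsProbabilityMeasure P] {f g h : Ω → ℝ} (hf : Integrable f P)
    (hg : Integrable g P) (hh : Integrable h P) :
    ∫ ω, ((f ω + g ω) - h ω + 1) ∂P = (∫ ω, f ω ∂P + ∫ ω, g ω ∂P) - ∫ ω, h ω ∂P + 1 := by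
  have h1 : Integrable (fun ω => f ω + g ω) P := hf.add hg
  have h2 : Integrable (fun ω => (f ω + g ω) - h ω) P := h1.sub hh
  rw [integral_add h2 (integrable_const _), integral_sub h1 hh, integral_add hf hg]
  simp

/-- The centred count. -/
def X (E : ERW G d p Ω P) (n : ℕ) (a : G) (ω : Ω) : ℝ := (E.count a n ω : ℝ) - n / d

lemma dep_X (E : ERW G d p Ω P) (n : ℕ) : E.Dep n (fun ω a => E.X n a ω) := by
  intro ω ω' h
  funext a
  have := congrFun (E.dep_count n ω ω' h) a
  simp only at this
  simp only [X, this]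

lemma q_eq (E : ERW G d p Ω P) (hd : 3 ≤ d) {n : ℕ} (hn : 1 ≤ n) (a : G) (ω : Ω) :
    E.q n a ω = 1 / d + (p * d - 1) / (d - 1) * (E.X n a ω / n) := by
  have h1 : (n : ℝ) ≠ 0 := by positivity
  have h2 : (d : ℝ) ≠ 0 := by positivity
  have h3 : (d : ℝ) - 1 ≠ 0 := by
    have : (3 : ℝ) ≤ d := by exact_mod_cast hd
    linarith
  simp only [q, X]
  field_simp
  ring

lemma count_succ (E : ERW G d p Ω P) (n : ℕ) (a : G) (ω : Ω) :
    E.count a (n + 1) ω = E.count a n ω + if E.g (n + 1) ω = a then 1 else 0 := by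
  simp only [count]
  rw [← Finset.insert_Icc_right_eq_Icc_add_one (by omega : 1 ≤ n + 1), Finset.filter_insert]
  split_ifs with h
  · rw [Finset.card_insert_of_notMem (by simp)]
  · simp

lemma count_le (E : ERW G d p Ω P) (n : ℕ) (a : G) (ω : Ω) : E.count a n ω ≤ n := by
  simp only [count]
  refine (Finset.card_filter_le _ _).trans ?_
  simp

lemma X_rec [IsProbabilityMeasure P] (E : ERW G d p Ω P) (hd : 3 ≤ d) {n : ℕ} (hn : 1 ≤ n)
    {a : G} (ha : a ∈ E.S) :
    ∫ ω, E.X (n + 1) a ω ^ 2 ∂P ≤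
      (1 + 2 * ((p * d - 1) / (d - 1)) / n) * ∫ ω, E.X n a ω ^ 2 ∂P + 1 := by
  have hX : ∀ {f : ℝ → ℝ}, E.Dep n (fun ω => f (E.X n a ω)) := by
    intro f ω ω' h
    have := congrFun (E.dep_X n ω ω' h) a
    simp only at this
    simp only [this]
  have hd3 : (3 : ℝ) ≤ d := by exact_mod_cast hd
  have hd0 : (0 : ℝ) < 1 / d := by positivity
  have hd1 : (1 : ℝ) / d ≤ 1 := by
    rw [div_le_one (by linarith)]
    linarith
  have hXI : E.Dep (n + 1) (fun ω => (2 * E.X n a ω) * (if E.g (n + 1) ω = a then 1 else 0)) := by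
    intro ω ω' h
    have := (hX (f := id)).mono (Nat.le_succ n) ω ω' h
    simp only [id] at this
    simp only [this, h (n + 1) (by simp)]
  have hXs : E.Dep (n + 1) (fun ω => E.X (n + 1) a ω ^ 2) := by
    intro ω ω' h
    have := congrFun (E.dep_X (n + 1) ω ω' h) a
    simp only at this
    simp only [this]
  have i1 : Integrable (fun ω => E.X n a ω ^ 2) P := (hX (f := fun x => x ^ 2)).integrable
  have i2 : Integrable (fun ω => 2 * E.X n a ω) P := (hX (f := fun x => 2 * x)).integrable
  have hle : ∀ ω, E.X (n + 1) a ω ^ 2 ≤ (E.X n a ω ^ 2 +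
      (2 * E.X n a ω) * (if E.g (n + 1) ω = a then 1 else 0)) -
      (2 * E.X n a ω) * (1 / d) + 1 := by
    intro ω
    have e : E.X (n + 1) a ω = E.X n a ω + ((if E.g (n + 1) ω = a then 1 else 0) - 1 / d) := by
      simp only [X, count_succ]
      push_cast
      ring
    rw [e]
    split_ifs <;> nlinarith
  calc ∫ ω, E.X (n + 1) a ω ^ 2 ∂P ≤ ∫ ω, ((E.X n a ω ^ 2 +
      (2 * E.X n a ω) * (if E.g (n + 1) ω = a then 1 else 0)) -
      (2 * E.X n a ω) * (1 / d) + 1) ∂P :=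
        integral_mono hXs.integrable
          (((i1.add hXI.integrable).sub (i2.mul_const _)).add (integrable_const _)) hle
    _ = (∫ ω, E.X n a ω ^ 2 ∂P + ∫ ω, (2 * E.X n a ω) * E.q n a ω ∂P) -
        ∫ ω, (2 * E.X n a ω) * (1 / d) ∂P + 1 := by
        rw [integral_comb_aux i1 hXI.integrable (i2.mul_const _),
          E.integral_step hn (hX (f := fun x => 2 * x)) ha]
    _ = _ := by
        have e : ∫ ω, (2 * E.X n a ω) * E.q n a ω ∂P = ∫ ω, (2 * E.X n a ω) * (1 / d) ∂P +
            2 * ((p * d - 1) / (d - 1)) / n * ∫ ω, E.X n a ω ^ 2 ∂P := by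
          rw [← integral_const_mul, ← integral_add (i2.mul_const _) (i1.const_mul _)]
          refine integral_congr_ae (Eventually.of_forall fun ω => ?_)
          simp only [E.q_eq hd hn]
          ring
        rw [e]
        ring

lemma X_one [IsProbabilityMeasure P] (E : ERW G d p Ω P) (hd : 3 ≤ d) (a : G) :
    ∫ ω, E.X 1 a ω ^ 2 ∂P ≤ 1 := by
  have hd3 : (3 : ℝ) ≤ d := by exact_mod_cast hd
  have hd0 : (0 : ℝ) < 1 / d := by positivity
  have hd1 : (1 : ℝ) / d ≤ 1 := by
    rw [div_le_one (by linarith)]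
    linarith
  have hXs : E.Dep 1 (fun ω => E.X 1 a ω ^ 2) := by
    intro ω ω' h
    have := congrFun (E.dep_X 1 ω ω' h) a
    simp only at this
    simp only [this]
  calc ∫ ω, E.X 1 a ω ^ 2 ∂P ≤ ∫ ω, (1 : ℝ) ∂P := by
        refine integral_mono hXs.integrable (integrable_const _) fun ω => ?_
        have h0 : (0 : ℝ) ≤ E.count a 1 ω := by positivity
        have h1 : (E.count a 1 ω : ℝ) ≤ 1 := by exact_mod_cast E.count_le 1 a ω
        simp only [X, Nat.cast_one]
        nlinarith
    _ = 1 := by simp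

lemma q_nonneg (E : ERW G d p Ω P) (hd : 3 ≤ d) (hp0 : 0 ≤ p) (hp1 : p < 1)
    (n : ℕ) (a : G) (ω : Ω) : 0 ≤ E.q n a ω := by
  have hd3 : (3 : ℝ) ≤ d := by exact_mod_cast hd
  have h1 : (E.count a n ω : ℝ) ≤ n := by exact_mod_cast E.count_le n a ω
  have h2 : 0 ≤ (1 - p) / ((d : ℝ) - 1) := div_nonneg (by linarith) (by linarith)
  have h3 : 0 ≤ ((n : ℝ) - E.count a n ω) / n := div_nonneg (by linarith) (by positivity)
  simp only [q]
  positivity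

lemma q_le_one (E : ERW G d p Ω P) (hd : 3 ≤ d) (hp0 : 0 ≤ p) (hp1 : p < 1)
    {n : ℕ} (hn : 1 ≤ n) (a : G) (ω : Ω) : E.q n a ω ≤ 1 := by
  have hd3 : (3 : ℝ) ≤ d := by exact_mod_cast hd
  have h1 : (E.count a n ω : ℝ) ≤ n := by exact_mod_cast E.count_le n a ω
  have h2 : (1 - p) / ((d : ℝ) - 1) ≤ 1 := by
    rw [div_le_one (by linarith)]
    linarith
  have hn0 : (0 : ℝ) < n := by exact_mod_cast hn
  have h3 : 0 ≤ ((n : ℝ) - E.count a n ω) / n := div_nonneg (by linarith) (by positivity)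
  have h4 : 0 ≤ (E.count a n ω : ℝ) / n := by positivity
  have h5 : (E.count a n ω : ℝ) / n + ((n : ℝ) - E.count a n ω) / n = 1 := by
    field_simp
    ring
  simp only [q]
  nlinarith [mul_le_mul_of_nonneg_right h2 h3, mul_le_mul_of_nonneg_right hp1.le h4]

/-- Indicator of a step towards the root. -/
def U (E : ERW G d p Ω P) (γ : G → G) (k : ℕ) (ω : Ω) : ℝ :=
  if E.g (k + 1) ω = γ (E.pos k ω) then 1 else 0

/-- Conditional probability of a step towards the root. -/
def Q (E : ERW G d p Ω P) (γ : G → G) (k : ℕ) (ω : Ω) : ℝ :=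
  if E.pos k ω = 1 then 0 else E.q k (γ (E.pos k ω)) ω

/-- The martingale part. -/
def W (E : ERW G d p Ω P) (γ : G → G) (n : ℕ) (ω : Ω) : ℝ :=
  ∑ k ∈ Finset.range n, (E.U γ k ω - E.Q γ k ω)

lemma dep_U (E : ERW G d p Ω P) (γ : G → G) (k : ℕ) : E.Dep (k + 1) (E.U γ k) := by
  intro ω ω' h
  simp only [U]
  rw [h (k + 1) (by simp), (E.dep_pos k).mono (Nat.le_succ k) ω ω' h]

lemma dep_Q (E : ERW G d p Ω P) (γ : G → G) (k : ℕ) : E.Dep k (E.Q γ k) := by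
  intro ω ω' h
  have h1 := E.dep_q k ω ω' h
  simp only [Q]
  rw [E.dep_pos k ω ω' h]
  have := congrFun h1 (γ (E.pos k ω'))
  simp only at this
  rw [this]

lemma dep_W (E : ERW G d p Ω P) (γ : G → G) (n : ℕ) : E.Dep n (E.W γ n) := by
  intro ω ω' h
  simp only [W]
  refine Finset.sum_congr rfl fun k hk => ?_
  have hk' := Finset.mem_range.1 hk
  rw [(E.dep_U γ k).mono (by omega : k + 1 ≤ n) ω ω' h, (E.dep_Q γ k).mono hk'.le ω ω' h]

lemma U_zero (E : ERW G d p Ω P) {γ : G → G} (h1 : γ 1 = 1) (ω : Ω) : E.U γ 0 ω = 0 := by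
  simp only [U, pos, h1, zero_add]
  rw [if_neg]
  intro h
  exact E.one_not_mem (h ▸ E.mem_S 1 le_rfl ω)

lemma Q_zero (E : ERW G d p Ω P) {γ : G → G} (ω : Ω) : E.Q γ 0 ω = 0 := by
  simp [Q, pos]

lemma integral_U [IsProbabilityMeasure P] (E : ERW G d p Ω P) {γ : G → G} (h1 : γ 1 = 1)
    (hS : ∀ x, x ≠ 1 → γ x ∈ E.S) {n : ℕ} {F : Ω → ℝ} (hF : E.Dep n F) :
    ∫ ω, F ω * E.U γ n ω ∂P = ∫ ω, F ω * E.Q γ n ω ∂P := by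
  rcases Nat.eq_zero_or_pos n with rfl | hn
  · simp [E.U_zero h1, E.Q_zero]
  have hdep : ∀ a, E.Dep n (fun ω => F ω * (if γ (E.pos n ω) = a then 1 else 0)) := by
    intro a ω ω' h
    simp only [hF ω ω' h, E.dep_pos n ω ω' h]
  have e1 : ∀ ω, F ω * E.U γ n ω = ∑ a ∈ E.S,
      (F ω * (if γ (E.pos n ω) = a then 1 else 0)) * (if E.g (n + 1) ω = a then 1 else 0) := by
    intro ω
    rw [Finset.sum_eq_single (E.g (n + 1) ω)]
    · simp [U, eq_comm]
    · intro b _ hb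
      simp [hb.symm]
    · intro h
      exact absurd (E.mem_S (n + 1) (by omega) ω) h
  have e2 : ∀ ω, F ω * E.Q γ n ω = ∑ a ∈ E.S,
      (F ω * (if γ (E.pos n ω) = a then 1 else 0)) * E.q n a ω := by
    intro ω
    by_cases hx : E.pos n ω = 1
    · simp only [Q, hx, if_true, h1]
      rw [Finset.sum_eq_zero]
      · simp
      · intro a ha
        have : ¬ (1 = a) := fun h => E.one_not_mem (h ▸ ha)
        simp [this]
    · rw [Finset.sum_eq_single (γ (E.pos n ω))]
      · simp [Q, hx]
      · intro b _ hb
        simp [hb.symm]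
      · intro h
        exact absurd (hS _ hx) h
  simp only [e1, e2]
  have d1 : ∀ a, E.Dep (n + 1) (fun ω => (F ω * (if γ (E.pos n ω) = a then 1 else 0)) *
      (if E.g (n + 1) ω = a then 1 else 0)) := by
    intro a ω ω' h
    have := (hdep a).mono (Nat.le_succ n) ω ω' h
    simp only at this
    simp only [this, h (n + 1) (by simp)]
  have d2 : ∀ a, E.Dep n (fun ω => (F ω * (if γ (E.pos n ω) = a then 1 else 0)) * E.q n a ω) := by
    intro a ω ω' h
    have h2 := hdep a ω ω' h
    have h3 := congrFun (E.dep_q n ω ω' h) a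
    simp only at h2 h3
    simp only [h2, h3]
  rw [integral_finsetSum _ fun a _ => (d1 a).integrable,
    integral_finsetSum _ fun a _ => (d2 a).integrable]
  exact Finset.sum_congr rfl fun a ha => E.integral_step hn (hdep a) ha

lemma Q_mem (E : ERW G d p Ω P) (hd : 3 ≤ d) (hp0 : 0 ≤ p) (hp1 : p < 1) (γ : G → G)
    (n : ℕ) (ω : Ω) : 0 ≤ E.Q γ n ω ∧ E.Q γ n ω ≤ 1 := by
  rcases Nat.eq_zero_or_pos n with rfl | hn
  · simp [E.Q_zero]
  · simp only [Q]
    split_ifs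
    · simp
    · exact ⟨E.q_nonneg hd hp0 hp1 _ _ _, E.q_le_one hd hp0 hp1 hn _ _⟩

lemma W_sq [IsProbabilityMeasure P] (E : ERW G d p Ω P) (hd : 3 ≤ d) (hp0 : 0 ≤ p) (hp1 : p < 1)
    {γ : G → G} (h1 : γ 1 = 1) (hS : ∀ x, x ≠ 1 → γ x ∈ E.S) (n : ℕ) :
    ∫ ω, E.W γ n ω ^ 2 ∂P ≤ n := by
  induction n with
  | zero => simp [W]
  | succ n ih =>
    have dW2 : E.Dep n (fun ω => E.W γ n ω ^ 2) := fun ω ω' h => by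
      simp only [E.dep_W γ n ω ω' h]
    have dW2' : E.Dep (n + 1) (fun ω => E.W γ (n + 1) ω ^ 2) := fun ω ω' h => by
      simp only [E.dep_W γ (n + 1) ω ω' h]
    have d2 : E.Dep n (fun ω => 2 * E.W γ n ω) := fun ω ω' h => by
      simp only [E.dep_W γ n ω ω' h]
    have dU : E.Dep (n + 1) (fun ω => 2 * E.W γ n ω * E.U γ n ω) := fun ω ω' h => by
      simp only [(E.dep_W γ n).mono (Nat.le_succ n) ω ω' h, E.dep_U γ n ω ω' h]
    have dQ : E.Dep n (fun ω => 2 * E.W γ n ω * E.Q γ n ω) := fun ω ω' h => by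
      simp only [E.dep_W γ n ω ω' h, E.dep_Q γ n ω ω' h]
    calc ∫ ω, E.W γ (n + 1) ω ^ 2 ∂P ≤ ∫ ω, ((E.W γ n ω ^ 2 + 2 * E.W γ n ω * E.U γ n ω)
          - 2 * E.W γ n ω * E.Q γ n ω + 1) ∂P := by
          refine integral_mono dW2'.integrable
            (((dW2.integrable.add dU.integrable).sub dQ.integrable).add (integrable_const _))
            fun ω => ?_
          obtain ⟨q0, q1⟩ := E.Q_mem hd hp0 hp1 γ n ω
          have u : E.U γ n ω = 0 ∨ E.U γ n ω = 1 := by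
            simp only [U]
            split_ifs <;> simp
          have e : E.W γ (n + 1) ω = E.W γ n ω + (E.U γ n ω - E.Q γ n ω) := by
            simp only [W, Finset.sum_range_succ]
          simp only [e]
          rcases u with u | u <;> rw [u] <;> nlinarith
      _ = ∫ ω, E.W γ n ω ^ 2 ∂P + 1 := by
          rw [integral_comb_aux dW2.integrable dU.integrable dQ.integrable,
            E.integral_U h1 hS d2]
          ring
      _ ≤ _ := by
          push_cast
          linarith

end Prob2

end ERW

section RealAux

lemma erw_sum_inv_sqrt (n : ℕ) :
    ∑ k ∈ Finset.Ico 1 n, 1 / Real.sqrt k ≤ 2 * Real.sqrt n := by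
  have key : ∀ m : ℕ, ∑ k ∈ Finset.Ico 1 (m + 1), 1 / Real.sqrt k ≤ 2 * Real.sqrt m := by
    intro m
    induction m with
    | zero => simp
    | succ m ih =>
      rw [Finset.sum_Ico_succ_top (by omega)]
      have hs : 0 < Real.sqrt ((m + 1 : ℕ) : ℝ) := Real.sqrt_pos.2 (by positivity)
      have e1 := Real.sq_sqrt (by positivity : (0 : ℝ) ≤ ((m + 1 : ℕ) : ℝ))
      have e2 := Real.sq_sqrt (by positivity : (0 : ℝ) ≤ (m : ℝ))
      have : 1 / Real.sqrt ((m + 1 : ℕ) : ℝ) ≤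
          2 * Real.sqrt ((m + 1 : ℕ) : ℝ) - 2 * Real.sqrt m := by
        rw [div_le_iff₀ hs]
        push_cast at e1 ⊢
        nlinarith [sq_nonneg (Real.sqrt ((m : ℝ) + 1) - Real.sqrt m)]
      linarith
  refine le_trans ?_ (key n)
  refine Finset.sum_le_sum_of_subset_of_nonneg (Finset.Ico_subset_Ico_right (by omega)) ?_
  intros
  positivity

lemma erw_sum_inv {n : ℕ} (hn : 1 ≤ n) :
    ∑ k ∈ Finset.Ico 1 n, 1 / (k : ℝ) ≤ 1 + Real.log n := by
  have key : ∀ m : ℕ, 1 ≤ m → ∑ k ∈ Finset.Ico 1 (m + 1), 1 / (k : ℝ) ≤ 1 + Real.log m := by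
    intro m hm
    induction m, hm using Nat.le_induction with
    | base => simp
    | succ m hm ih =>
      rw [Finset.sum_Ico_succ_top (by omega)]
      have hm0 : (0 : ℝ) < m := by exact_mod_cast hm
      have h1 := Real.one_sub_inv_le_log_of_pos (x := ((m + 1 : ℕ) : ℝ) / m) (by positivity)
      rw [Real.log_div (by positivity) (by positivity)] at h1
      have h2 : 1 - (((m + 1 : ℕ) : ℝ) / m)⁻¹ = 1 / ((m + 1 : ℕ) : ℝ) := by
        push_cast
        field_simp
        ring
      rw [h2] at h1
      linarith
  refine le_trans ?_ (key n hn)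
  refine Finset.sum_le_sum_of_subset_of_nonneg (Finset.Ico_subset_Ico_right (by omega)) ?_
  intros
  positivity

lemma erw_sum_rpow {q : ℝ} (hq0 : 0 < q) (hq1 : q ≤ 1) {n : ℕ} (hn : 1 ≤ n) :
    ∑ k ∈ Finset.Ico 1 n, (k : ℝ) ^ q / k ≤ (n : ℝ) ^ q / q := by
  have key : ∀ m : ℕ, 1 ≤ m → ∑ k ∈ Finset.Ico 1 (m + 1), (k : ℝ) ^ q / k ≤ (m : ℝ) ^ q / q := by
    intro m hm
    induction m, hm using Nat.le_induction with
    | base =>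
      simp only [Finset.sum_Ico_succ_top (le_refl 1), Finset.Ico_self, Finset.sum_empty,
        Nat.cast_one, Real.one_rpow, zero_add]
      exact (le_div_iff₀ hq0).2 (by linarith)
    | succ m hm ih =>
      rw [Finset.sum_Ico_succ_top (by omega)]
      have hm0 : (0 : ℝ) < m := by exact_mod_cast hm
      have hM : (0 : ℝ) < ((m + 1 : ℕ) : ℝ) := by positivity
      set M : ℝ := ((m + 1 : ℕ) : ℝ) with hMdef
      have hMm : (m : ℝ) = M - 1 := by simp [hMdef]
      have h1 := rpow_one_add_le_one_add_mul_self (s := -(1 / M)) (by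
        have : 1 / M ≤ 1 := by
          rw [div_le_one hM]
          linarith
        linarith) hq0.le hq1
      have h2 : (m : ℝ) = M * (1 + -(1 / M)) := by
        rw [hMm]
        field_simp
        ring
      have h3 : (m : ℝ) ^ q = M ^ q * (1 + -(1 / M)) ^ q := by
        conv_lhs => rw [h2]
        refine Real.mul_rpow hM.le ?_
        have : 1 / M ≤ 1 := by
          rw [div_le_one hM]
          linarith
        linarith
      have hMq : 0 < M ^ q := Real.rpow_pos_of_pos hM q
      have h4 : (m : ℝ) ^ q ≤ M ^ q * (1 + q * -(1 / M)) := by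
        rw [h3]
        gcongr
      have h5 : (m : ℝ) ^ q / q ≤ M ^ q * (1 + q * -(1 / M)) / q := by gcongr
      have h6 : M ^ q * (1 + q * -(1 / M)) / q = M ^ q / q - M ^ q / M := by
        field_simp
        ring
      linarith
  refine le_trans ?_ (key n hn)
  refine Finset.sum_le_sum_of_subset_of_nonneg (Finset.Ico_subset_Ico_right (by omega)) ?_
  intros
  positivity

lemma erw_rec_sub {α : ℝ} (h0 : -(1 / 2) ≤ α) (h1 : α < 1 / 2) {x : ℕ → ℝ} (hx1 : x 1 ≤ 1)
    (hx : ∀ n, 1 ≤ n → x (n + 1) ≤ (1 + 2 * α / n) * x n + 1) :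
    ∀ n, 1 ≤ n → x n ≤ max 1 (1 / (1 - 2 * α)) * n := by
  intro n hn
  set C := max 1 (1 / (1 - 2 * α)) with hC
  have hC1 : 1 ≤ C := le_max_left _ _
  have hC2 : 1 ≤ C * (1 - 2 * α) := by
    have : 1 / (1 - 2 * α) ≤ C := le_max_right _ _
    rwa [div_le_iff₀ (by linarith)] at this
  induction n, hn using Nat.le_induction with
  | base => simpa using hx1.trans hC1
  | succ n hn ih =>
    have hn1 : (1 : ℝ) ≤ n := by exact_mod_cast hn
    have hn0 : (0 : ℝ) < n := by linarith
    have hc : 0 ≤ 1 + 2 * α / n := by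
      have : -1 ≤ 2 * α / n := by
        rw [le_div_iff₀ hn0]
        linarith
      linarith
    calc x (n + 1) ≤ (1 + 2 * α / n) * x n + 1 := hx n hn
      _ ≤ (1 + 2 * α / n) * (C * n) + 1 := by gcongr
      _ = C * n + 2 * α * C + 1 := by field_simp
      _ ≤ _ := by
        push_cast
        nlinarith

lemma erw_rec_crit {x : ℕ → ℝ} (hx1 : x 1 ≤ 1)
    (hx : ∀ n : ℕ, 1 ≤ n → x (n + 1) ≤ (1 + 1 / n) * x n + 1) :
    ∀ n : ℕ, 1 ≤ n → x n ≤ n * (1 + Real.log n) := by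
  intro n hn
  induction n, hn using Nat.le_induction with
  | base => simpa using hx1
  | succ m hm ih =>
    have hm0 : (0 : ℝ) < m := by exact_mod_cast hm
    have h1 := Real.one_sub_inv_le_log_of_pos (x := ((m + 1 : ℕ) : ℝ) / m) (by positivity)
    rw [Real.log_div (by positivity) (by positivity)] at h1
    have h2 : 1 - (((m + 1 : ℕ) : ℝ) / m)⁻¹ = 1 / ((m : ℝ) + 1) := by
      push_cast
      field_simp
      ring
    rw [h2, div_le_iff₀ (by positivity)] at h1
    calc x (m + 1) ≤ (1 + 1 / m) * x m + 1 := hx m hm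
      _ ≤ (1 + 1 / m) * (m * (1 + Real.log m)) + 1 := by gcongr
      _ = (m + 1) * (1 + Real.log m) + 1 := by field_simp
      _ ≤ _ := by
        push_cast at h1 ⊢
        nlinarith

lemma erw_rec_super {α : ℝ} (h1 : 1 / 2 < α) {x : ℕ → ℝ} (hx1 : x 1 ≤ 1)
    (hx : ∀ n : ℕ, 1 ≤ n → x (n + 1) ≤ (1 + 2 * α / n) * x n + 1) :
    ∀ n : ℕ, 1 ≤ n → x n ≤ (1 + 1 / (2 * α - 1)) * (n : ℝ) ^ (2 * α) := by
  set c := 1 / (2 * α - 1) with hc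
  have ha : 0 < 2 * α - 1 := by linarith
  have hc0 : 0 < c := by positivity
  have hc1 : c * (2 * α - 1) = 1 := by
    rw [hc]
    field_simp
  have key : ∀ n : ℕ, 1 ≤ n → x n + c * n ≤ (1 + c) * (n : ℝ) ^ (2 * α) := by
    intro n hn
    induction n, hn using Nat.le_induction with
    | base =>
      simp only [Nat.cast_one, Real.one_rpow]
      linarith
    | succ n hn ih =>
      have hn0 : (0 : ℝ) < n := by exact_mod_cast hn
      have hB := one_add_mul_self_le_rpow_one_add (s := 1 / (n : ℝ)) (by
        have : 0 < 1 / (n : ℝ) := by positivity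
        linarith) (by linarith : 1 ≤ 2 * α)
      have e1 : ((n + 1 : ℕ) : ℝ) = n * (1 + 1 / n) := by
        push_cast
        field_simp
      have e2 : ((n + 1 : ℕ) : ℝ) ^ (2 * α) = (n : ℝ) ^ (2 * α) * (1 + 1 / (n : ℝ)) ^ (2 * α) := by
        rw [e1]
        exact Real.mul_rpow hn0.le (by positivity)
      have hnp : 0 < (n : ℝ) ^ (2 * α) := Real.rpow_pos_of_pos hn0 _
      have hα : 0 < α := by linarith
      calc x (n + 1) + c * (n + 1 : ℕ) ≤ (1 + 2 * α / n) * x n + 1 + c * (n + 1 : ℕ) := by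
            linarith [hx n hn]
        _ = (1 + 2 * α / n) * (x n + c * n) + (1 - c * (2 * α - 1)) := by
            push_cast
            field_simp
            ring
        _ = (1 + 2 * α * (1 / n)) * (x n + c * n) := by
            rw [hc1]
            ring
        _ ≤ (1 + 2 * α * (1 / n)) * ((1 + c) * (n : ℝ) ^ (2 * α)) := by gcongr
        _ ≤ (1 + 1 / (n : ℝ)) ^ (2 * α) * ((1 + c) * (n : ℝ) ^ (2 * α)) := by gcongr
        _ = _ := by
            rw [e2]
            ring
  intro n hn
  have := key n hn
  have : 0 ≤ c * n := by positivity
  linarith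

end RealAux

namespace ERW

section Core

variable {G : Type*} [Group G] [DecidableEq G] {d : ℕ} {p : ℝ}
  {Ω : Type*} [MeasurableSpace Ω] {P : Measure Ω}

/-- Indicator of being at the root. -/
def Z (E : ERW G d p Ω P) (k : ℕ) (ω : Ω) : ℝ := if E.pos k ω = 1 then 1 else 0

/-- Bias of the drift away from the root. -/
def bias (E : ERW G d p Ω P) (γ : G → G) (k : ℕ) (ω : Ω) : ℝ :=
  if E.pos k ω = 1 then 0 else -((p * d - 1) / (d - 1) * (E.X k (γ (E.pos k ω)) ω / k))

lemma dep_Z (E : ERW G d p Ω P) (k : ℕ) : E.Dep k (E.Z k) := by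
  intro ω ω' h
  simp only [Z, E.dep_pos k ω ω' h]

lemma dep_bias (E : ERW G d p Ω P) (γ : G → G) (k : ℕ) : E.Dep k (E.bias γ k) := by
  intro ω ω' h
  have h1 := congrFun (E.dep_X k ω ω' h) (γ (E.pos k ω'))
  simp only at h1
  simp only [bias, E.dep_pos k ω ω' h, h1]

lemma Q_bias (E : ERW G d p Ω P) (hd : 3 ≤ d) (γ : G → G) (k : ℕ) (ω : Ω) :
    1 / d - E.Q γ k ω = E.bias γ k ω + 1 / d * E.Z k ω := by
  rcases Nat.eq_zero_or_pos k with rfl | hk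
  · simp [Q, bias, Z, pos]
  simp only [Q, bias, Z]
  split_ifs
  · ring
  · rw [E.q_eq hd hk]
    ring

lemma dist_eq (E : ERW G d p Ω P) {γ : G → G}
    (hγ : ∀ x, ∀ s ∈ E.S, (cayleyGraph E.S).dist 1 (s * x) + 2 * (if s = γ x then 1 else 0)
        = (cayleyGraph E.S).dist 1 x + 1) (n : ℕ) (ω : Ω) :
    (E.dist n ω : ℝ) = n - 2 * ∑ k ∈ Finset.range n, E.U γ k ω := by
  induction n with
  | zero => simp [dist, pos]
  | succ n ih =>
    have h := hγ (E.pos n ω) (E.g (n + 1) ω) (E.mem_S _ (by omega) ω)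
    have h' : (E.dist (n + 1) ω : ℝ) + 2 * E.U γ n ω = E.dist n ω + 1 := by
      simp only [dist, pos, U]
      exact_mod_cast h
    rw [Finset.sum_range_succ]
    push_cast
    linarith

lemma dist_decomp (E : ERW G d p Ω P) (hd : 3 ≤ d) {γ : G → G}
    (hγ : ∀ x, ∀ s ∈ E.S, (cayleyGraph E.S).dist 1 (s * x) + 2 * (if s = γ x then 1 else 0)
        = (cayleyGraph E.S).dist 1 x + 1) (n : ℕ) (ω : Ω) :
    (E.dist n ω : ℝ) - n * (((d : ℝ) - 2) / d) = -2 * E.W γ n ω +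
      2 * ∑ k ∈ Finset.range n, E.bias γ k ω + 2 / d * ∑ k ∈ Finset.range n, E.Z k ω := by
  have hd0 : (d : ℝ) ≠ 0 := by positivity
  have e : ∑ k ∈ Finset.range n, (1 / (d : ℝ) - E.Q γ k ω) =
      ∑ k ∈ Finset.range n, (E.bias γ k ω + 1 / d * E.Z k ω) :=
    Finset.sum_congr rfl fun k _ => E.Q_bias hd γ k ω
  rw [Finset.sum_sub_distrib, Finset.sum_add_distrib, ← Finset.mul_sum] at e
  simp only [Finset.sum_const, Finset.card_range, nsmul_eq_mul] at e
  rw [E.dist_eq hγ, W, Finset.sum_sub_distrib]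
  have e2 : (n : ℝ) * (((d : ℝ) - 2) / d) = n - 2 * (n * (1 / d)) := by
    field_simp
  rw [e2]
  linear_combination 2 * e

lemma bias_sq_int [IsProbabilityMeasure P] (E : ERW G d p Ω P) (hd : 3 ≤ d) (hp0 : 0 ≤ p)
    (hp1 : p < 1) {γ : G → G} (hS : ∀ x, x ≠ 1 → γ x ∈ E.S) {C : ℝ} {h : ℕ → ℝ}
    (hX : ∀ a ∈ E.S, ∀ n : ℕ, 1 ≤ n → ∫ ω, E.X n a ω ^ 2 ∂P ≤ C * (n * h n)) {k : ℕ}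
    (hk : 1 ≤ k) : ∫ ω, E.bias γ k ω ^ 2 ∂P ≤ d * C * (h k / k) := by
  have hd3 : (3 : ℝ) ≤ d := by exact_mod_cast hd
  have hk0 : (0 : ℝ) < k := by exact_mod_cast hk
  have hα : ((p * d - 1) / ((d : ℝ) - 1)) ^ 2 ≤ 1 := by
    rw [sq_le_one_iff_abs_le_one, abs_le]
    constructor
    · rw [le_div_iff₀ (by linarith)]
      nlinarith
    · rw [div_le_one (by linarith)]
      nlinarith
  have i1 : ∀ a, Integrable (fun ω => (1 / (k : ℝ) ^ 2) * E.X k a ω ^ 2) P := by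
    intro a
    refine Dep.integrable (E := E) (n := k) fun ω ω' h => ?_
    have h1 := congrFun (E.dep_X k ω ω' h) a
    simp only at h1
    simp only [h1]
  have i2 : Integrable (fun ω => E.bias γ k ω ^ 2) P :=
    Dep.integrable (E := E) (n := k) fun ω ω' h => by simp only [E.dep_bias γ k ω ω' h]
  calc ∫ ω, E.bias γ k ω ^ 2 ∂P ≤ ∫ ω, ∑ a ∈ E.S, (1 / (k : ℝ) ^ 2) * E.X k a ω ^ 2 ∂P := by
        refine integral_mono i2 (integrable_finsetSum _ fun a _ => i1 a) fun ω => ?_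
        simp only [bias]
        split_ifs with hx
        · simp only [ne_eq, OfNat.ofNat_ne_zero, not_false_eq_true, zero_pow]
          exact Finset.sum_nonneg fun a _ => by positivity
        · calc (-((p * d - 1) / ((d : ℝ) - 1) * (E.X k (γ (E.pos k ω)) ω / k))) ^ 2
              = ((p * d - 1) / ((d : ℝ) - 1)) ^ 2 *
                ((1 / (k : ℝ) ^ 2) * E.X k (γ (E.pos k ω)) ω ^ 2) := by ring
            _ ≤ 1 * ((1 / (k : ℝ) ^ 2) * E.X k (γ (E.pos k ω)) ω ^ 2) := by gcongr
            _ = (1 / (k : ℝ) ^ 2) * E.X k (γ (E.pos k ω)) ω ^ 2 := one_mul _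
            _ ≤ _ := Finset.single_le_sum
                (f := fun a => (1 / (k : ℝ) ^ 2) * E.X k a ω ^ 2)
                (fun a _ => by positivity) (hS _ hx)
    _ = ∑ a ∈ E.S, (1 / (k : ℝ) ^ 2) * ∫ ω, E.X k a ω ^ 2 ∂P := by
        rw [integral_finsetSum _ fun a _ => i1 a]
        simp only [integral_const_mul]
    _ ≤ ∑ a ∈ E.S, (1 / (k : ℝ) ^ 2) * (C * (k * h k)) := by
        refine Finset.sum_le_sum fun a ha => ?_
        gcongr
        exact hX a ha k hk
    _ = _ := by
        rw [Finset.sum_const, E.card_S, nsmul_eq_mul]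
        field_simp

lemma bias_sum_sq [IsProbabilityMeasure P] (E : ERW G d p Ω P) (hd : 3 ≤ d) (hp0 : 0 ≤ p)
    (hp1 : p < 1) {γ : G → G} (hS : ∀ x, x ≠ 1 → γ x ∈ E.S) {C : ℝ} (hC : 0 ≤ C) {h : ℕ → ℝ}
    (hX : ∀ a ∈ E.S, ∀ n : ℕ, 1 ≤ n → ∫ ω, E.X n a ω ^ 2 ∂P ≤ C * (n * h n))
    (h1 : ∀ n, 1 ≤ n → 1 ≤ h n) (hmono : ∀ m n, 1 ≤ m → m ≤ n → h m ≤ h n) {n : ℕ}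
    (hn : 1 ≤ n) :
    ∫ ω, (∑ k ∈ Finset.range n, E.bias γ k ω) ^ 2 ∂P ≤ 4 * (d * C) * (n * h n) := by
  have hb0 : ∀ ω, E.bias γ 0 ω = 0 := fun ω => by simp [bias, pos]
  have e : ∀ ω, ∑ k ∈ Finset.range n, E.bias γ k ω = ∑ k ∈ Finset.Ico 1 n, E.bias γ k ω := by
    intro ω
    rw [Finset.range_eq_Ico, Finset.sum_eq_sum_Ico_succ_bot (by omega), hb0, zero_add]
  have hn0 : (0 : ℝ) < n := by exact_mod_cast hn
  have i2 : ∀ k ∈ Finset.Ico 1 n, Integrable (fun ω => Real.sqrt k * E.bias γ k ω ^ 2) P :=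
    fun k _ => Dep.integrable (E := E) (n := k) fun ω ω' h => by
      simp only [E.dep_bias γ k ω ω' h]
  have i3 : Integrable (fun ω => (∑ k ∈ Finset.range n, E.bias γ k ω) ^ 2) P :=
    Dep.integrable (E := E) (n := n) fun ω ω' h => by
      congr 1
      refine Finset.sum_congr rfl fun k hk => ?_
      exact (E.dep_bias γ k).mono (Finset.mem_range.1 hk).le ω ω' h
  calc ∫ ω, (∑ k ∈ Finset.range n, E.bias γ k ω) ^ 2 ∂P
      ≤ ∫ ω, (2 * Real.sqrt n) * ∑ k ∈ Finset.Ico 1 n, Real.sqrt k * E.bias γ k ω ^ 2 ∂P := by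
        refine integral_mono i3 ((integrable_finsetSum _ i2).const_mul _) fun ω => ?_
        simp only [e]
        refine (Finset.sum_sq_le_sum_mul_sum_of_sq_le_mul _ (f := fun k : ℕ => 1 / Real.sqrt k)
          (g := fun k : ℕ => Real.sqrt k * E.bias γ k ω ^ 2) (fun k _ => by positivity)
          (fun k _ => by positivity) fun k hk => ?_).trans ?_
        · have : 0 < Real.sqrt k := Real.sqrt_pos.2 (by
            exact_mod_cast (Finset.mem_Ico.1 hk).1)
          apply le_of_eq
          field_simp
        · refine mul_le_mul_of_nonneg_right (erw_sum_inv_sqrt n) ?_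
          exact Finset.sum_nonneg fun k _ => by positivity
    _ = (2 * Real.sqrt n) * ∑ k ∈ Finset.Ico 1 n, Real.sqrt k * ∫ ω, E.bias γ k ω ^ 2 ∂P := by
        rw [integral_const_mul, integral_finsetSum _ i2]
        simp only [integral_const_mul]
    _ ≤ (2 * Real.sqrt n) * ∑ k ∈ Finset.Ico 1 n, (d * C * h n) * (1 / Real.sqrt k) := by
        refine mul_le_mul_of_nonneg_left (Finset.sum_le_sum fun k hk => ?_) (by positivity)
        obtain ⟨hk1, hk2⟩ := Finset.mem_Ico.1 hk
        have hk0 : (0 : ℝ) < k := by exact_mod_cast hk1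
        have hs : 0 < Real.sqrt k := Real.sqrt_pos.2 hk0
        have hh : h k ≤ h n := hmono k n hk1 hk2.le
        calc Real.sqrt k * ∫ ω, E.bias γ k ω ^ 2 ∂P ≤ Real.sqrt k * (d * C * (h k / k)) := by
              gcongr
              exact E.bias_sq_int hd hp0 hp1 hS hX hk1
          _ = (d * C * h k) * (1 / Real.sqrt k) := by
              have e3 : (k : ℝ) = Real.sqrt k * Real.sqrt k := (Real.mul_self_sqrt hk0.le).symm
              have e4 : Real.sqrt k * (1 / (k : ℝ)) = 1 / Real.sqrt k := by
                rw [eq_div_iff hs.ne', mul_one_div, div_mul_eq_mul_div, ← e3, div_self hk0.ne']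
              rw [← e4]
              ring
          _ ≤ _ := by gcongr
    _ ≤ (2 * Real.sqrt n) * ((d * C * h n) * (2 * Real.sqrt n)) := by
        have : 0 ≤ h n := zero_le_one.trans (h1 n hn)
        rw [← Finset.mul_sum]
        gcongr
        exact erw_sum_inv_sqrt n
    _ = 4 * (d * C) * ((Real.sqrt n * Real.sqrt n) * h n) := by ring
    _ = _ := by rw [Real.mul_self_sqrt hn0.le]

lemma Z_int [IsProbabilityMeasure P] (E : ERW G d p Ω P) (hd : 3 ≤ d) (hp0 : 0 ≤ p)
    (hp1 : p < 1) {γ : G → G} (hγ1 : γ 1 = 1) (hS : ∀ x, x ≠ 1 → γ x ∈ E.S)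
    (hγ : ∀ x, ∀ s ∈ E.S, (cayleyGraph E.S).dist 1 (s * x) + 2 * (if s = γ x then 1 else 0)
        = (cayleyGraph E.S).dist 1 x + 1) {C : ℝ} (hC : 0 ≤ C) {h : ℕ → ℝ}
    (hX : ∀ a ∈ E.S, ∀ n : ℕ, 1 ≤ n → ∫ ω, E.X n a ω ^ 2 ∂P ≤ C * (n * h n))
    (h1 : ∀ n, 1 ≤ n → 1 ≤ h n) (hmono : ∀ m n, 1 ≤ m → m ≤ n → h m ≤ h n) {n : ℕ}
    (hn : 1 ≤ n) :
    ∫ ω, E.Z n ω ∂P ≤ (8 + 32 * (d * C)) / (((d : ℝ) - 2) / d) ^ 2 * (h n / n) := by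
  have hd3 : (3 : ℝ) ≤ d := by exact_mod_cast hd
  have hn0 : (0 : ℝ) < n := by exact_mod_cast hn
  have hv : 0 < ((d : ℝ) - 2) / d := div_pos (by linarith) (by linarith)
  set v := ((d : ℝ) - 2) / d with hvdef
  have iW : Integrable (fun ω => E.W γ n ω ^ 2) P :=
    Dep.integrable (E := E) (n := n) fun ω ω' h => by simp only [E.dep_W γ n ω ω' h]
  have i3 : Integrable (fun ω => (∑ k ∈ Finset.range n, E.bias γ k ω) ^ 2) P :=
    Dep.integrable (E := E) (n := n) fun ω ω' h => by
      congr 1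
      refine Finset.sum_congr rfl fun k hk => ?_
      exact (E.dep_bias γ k).mono (Finset.mem_range.1 hk).le ω ω' h
  have key : (n * v) ^ 2 * ∫ ω, E.Z n ω ∂P ≤ 8 * n + 8 * (4 * (d * C) * (n * h n)) := by
    calc (n * v) ^ 2 * ∫ ω, E.Z n ω ∂P = ∫ ω, (n * v) ^ 2 * E.Z n ω ∂P :=
          (integral_const_mul _ _).symm
      _ ≤ ∫ ω, (8 * E.W γ n ω ^ 2 + 8 * (∑ k ∈ Finset.range n, E.bias γ k ω) ^ 2) ∂P := by
          refine integral_mono ((E.dep_Z n).integrable.const_mul _)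
            ((iW.const_mul _).add (i3.const_mul _)) fun ω => ?_
          simp only [Z]
          split_ifs with hx
          · have hdec := E.dist_decomp hd hγ n ω
            have hz : (E.dist n ω : ℝ) = 0 := by simp [dist, hx]
            have hR : 0 ≤ 2 / (d : ℝ) * ∑ k ∈ Finset.range n, E.Z k ω := by
              have : 0 ≤ ∑ k ∈ Finset.range n, E.Z k ω := by
                refine Finset.sum_nonneg fun k _ => ?_
                simp only [Z]
                split_ifs <;> norm_num
              positivity
            rw [hz, ← hvdef] at hdec
            have hnv : 0 < n * v := by positivity
            set w := E.W γ n ω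
            set b := ∑ k ∈ Finset.range n, E.bias γ k ω
            have hle : n * v ≤ 2 * w - 2 * b := by linarith
            nlinarith [sq_nonneg (w + b)]
          · rw [mul_zero]
            positivity
      _ = 8 * ∫ ω, E.W γ n ω ^ 2 ∂P + 8 * ∫ ω, (∑ k ∈ Finset.range n, E.bias γ k ω) ^ 2 ∂P := by
          rw [integral_add (iW.const_mul _) (i3.const_mul _), integral_const_mul,
            integral_const_mul]
      _ ≤ _ := by
          gcongr
          · exact E.W_sq hd hp0 hp1 hγ1 hS n
          · exact E.bias_sum_sq hd hp0 hp1 hS hC hX h1 hmono hn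
  have h2 : 8 * (n : ℝ) ≤ 8 * (n * h n) := by
    have := h1 n hn
    nlinarith
  have e1 : (8 + 32 * (d * C)) / v ^ 2 * (h n / n) =
      (8 * (n * h n) + 8 * (4 * (d * C) * (n * h n))) / (n * v) ^ 2 := by
    field_simp
    ring
  rw [e1, le_div_iff₀ (by positivity)]
  linarith

theorem core [IsProbabilityMeasure P] (E : ERW G d p Ω P) (hd : 3 ≤ d) (hp0 : 0 ≤ p)
    (hp1 : p < 1) {C : ℝ} (hC : 0 ≤ C) {h : ℕ → ℝ}
    (hX : ∀ a ∈ E.S, ∀ n : ℕ, 1 ≤ n → ∫ ω, E.X n a ω ^ 2 ∂P ≤ C * (n * h n))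
    (h1 : ∀ n, 1 ≤ n → 1 ≤ h n) (hmono : ∀ m n, 1 ≤ m → m ≤ n → h m ≤ h n) :
    ∃ K : ℝ, 0 < K ∧ ∀ n : ℕ, 1 ≤ n →
      ∫ ω, |(E.dist n ω : ℝ) / n - ((d : ℝ) - 2) / d| ^ 2 ∂P ≤
        K * (h n + ∑ k ∈ Finset.Ico 1 n, h k / k) / n := by
  obtain ⟨γ, hγ1, hS, hγ⟩ := erw_step_exists E.symm_S E.one_not_mem E.tree
  have hd3 : (3 : ℝ) ≤ d := by exact_mod_cast hd
  have hv : 0 < ((d : ℝ) - 2) / d := div_pos (by linarith) (by linarith)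
  set D := (8 + 32 * (d * C)) / (((d : ℝ) - 2) / d) ^ 2 with hD
  have hD0 : 0 ≤ D := by positivity
  refine ⟨15 + 48 * (d * C) + 3 * D, by positivity, fun n hn => ?_⟩
  have hn0 : (0 : ℝ) < n := by exact_mod_cast hn
  have iW : Integrable (fun ω => E.W γ n ω ^ 2) P :=
    Dep.integrable (E := E) (n := n) fun ω ω' h => by simp only [E.dep_W γ n ω ω' h]
  have i3 : Integrable (fun ω => (∑ k ∈ Finset.range n, E.bias γ k ω) ^ 2) P :=
    Dep.integrable (E := E) (n := n) fun ω ω' h => by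
      congr 1
      refine Finset.sum_congr rfl fun k hk => ?_
      exact (E.dep_bias γ k).mono (Finset.mem_range.1 hk).le ω ω' h
  have iZ : Integrable (fun ω => ∑ k ∈ Finset.range n, E.Z k ω) P :=
    integrable_finsetSum _ fun k _ => (E.dep_Z k).integrable
  have iD : Integrable (fun ω => |(E.dist n ω : ℝ) / n - ((d : ℝ) - 2) / d| ^ 2) P :=
    Dep.integrable (E := E) (n := n) fun ω ω' h => by
      simp only [dist, E.dep_pos n ω ω' h]
  have hRint : ∫ ω, ∑ k ∈ Finset.range n, E.Z k ω ∂P ≤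
      1 + D * ∑ k ∈ Finset.Ico 1 n, h k / k := by
    rw [integral_finsetSum _ fun k _ => (E.dep_Z k).integrable, Finset.range_eq_Ico,
      Finset.sum_eq_sum_Ico_succ_bot (by omega), Finset.mul_sum]
    refine add_le_add ?_ (Finset.sum_le_sum fun k hk => ?_)
    · simp [Z, pos]
    · exact E.Z_int hd hp0 hp1 hγ1 hS hγ hC hX h1 hmono (Finset.mem_Ico.1 hk).1
  have hpt : ∀ ω, |(E.dist n ω : ℝ) / n - ((d : ℝ) - 2) / d| ^ 2 ≤
      (1 / (n : ℝ) ^ 2) * ((12 * E.W γ n ω ^ 2 +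
        12 * (∑ k ∈ Finset.range n, E.bias γ k ω) ^ 2) +
        3 * n * ∑ k ∈ Finset.range n, E.Z k ω) := by
    intro ω
    have hdec := E.dist_decomp hd hγ n ω
    set w := E.W γ n ω
    set b := ∑ k ∈ Finset.range n, E.bias γ k ω
    set R := ∑ k ∈ Finset.range n, E.Z k ω with hR
    have hR0 : 0 ≤ R := by
      refine Finset.sum_nonneg fun k _ => ?_
      simp only [Z]
      split_ifs <;> norm_num
    have hRn : R ≤ n := by
      calc R ≤ ∑ k ∈ Finset.range n, (1 : ℝ) := by
            refine Finset.sum_le_sum fun k _ => ?_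
            simp only [Z]
            split_ifs <;> norm_num
        _ = n := by simp
    have e : (E.dist n ω : ℝ) / n - ((d : ℝ) - 2) / d =
        (-2 * w + 2 * b + 2 / d * R) / n := by
      rw [← hdec]
      field_simp
    rw [sq_abs, e, div_pow, div_eq_mul_one_div, mul_comm]
    gcongr
    have h2d : 2 / (d : ℝ) ≤ 1 := by
      rw [div_le_one (by linarith)]
      linarith
    have h2d0 : 0 ≤ 2 / (d : ℝ) := by positivity
    have hr1 : 2 / (d : ℝ) * R ≤ R := by nlinarith
    have hr0 : 0 ≤ 2 / (d : ℝ) * R := by positivity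
    set r := 2 / (d : ℝ) * R
    have hrr : r ^ 2 ≤ n * R := by nlinarith
    nlinarith [sq_nonneg (2 * w + 2 * b), sq_nonneg (2 * w + r), sq_nonneg (2 * b - r)]
  set S := ∑ k ∈ Finset.Ico 1 n, h k / k with hSdef
  have hS0 : 0 ≤ S := by
    refine Finset.sum_nonneg fun k hk => ?_
    have := h1 k (Finset.mem_Ico.1 hk).1
    positivity
  calc ∫ ω, |(E.dist n ω : ℝ) / n - ((d : ℝ) - 2) / d| ^ 2 ∂P
      ≤ ∫ ω, (1 / (n : ℝ) ^ 2) * ((12 * E.W γ n ω ^ 2 +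
        12 * (∑ k ∈ Finset.range n, E.bias γ k ω) ^ 2) +
        3 * n * ∑ k ∈ Finset.range n, E.Z k ω) ∂P :=
        integral_mono iD ((((iW.const_mul _).add (i3.const_mul _)).add
          (iZ.const_mul _)).const_mul _) hpt
    _ = (1 / (n : ℝ) ^ 2) * ((12 * ∫ ω, E.W γ n ω ^ 2 ∂P +
        12 * ∫ ω, (∑ k ∈ Finset.range n, E.bias γ k ω) ^ 2 ∂P) +
        3 * n * ∫ ω, ∑ k ∈ Finset.range n, E.Z k ω ∂P) := by
        have j1 : Integrable (fun ω => 12 * E.W γ n ω ^ 2 +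
          12 * (∑ k ∈ Finset.range n, E.bias γ k ω) ^ 2) P :=
          (iW.const_mul _).add (i3.const_mul _)
        rw [integral_const_mul, integral_add j1 (iZ.const_mul _),
          integral_add (iW.const_mul _) (i3.const_mul _), integral_const_mul, integral_const_mul,
          integral_const_mul]
    _ ≤ (1 / (n : ℝ) ^ 2) * ((12 * n + 12 * (4 * (d * C) * (n * h n))) +
        3 * n * (1 + D * S)) := by
        gcongr
        · exact E.W_sq hd hp0 hp1 hγ1 hS n
        · exact E.bias_sum_sq hd hp0 hp1 hS hC hX h1 hmono hn
    _ = (15 + 48 * (d * C) * h n + 3 * D * S) / n := by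
        field_simp
        ring
    _ ≤ _ := by
        have hh := h1 n hn
        have hdC : 0 ≤ d * C := by positivity
        gcongr
        nlinarith [mul_nonneg hdC hS0, mul_nonneg hD0 (zero_le_one.trans hh)]

end Core

end ERW

lemma erw_log_two_le {n : ℕ} (hn : 2 ≤ n) : 2 / 3 ≤ Real.log n := by
  have h1 : Real.log 2 ≤ Real.log n := Real.log_le_log (by norm_num) (by exact_mod_cast hn)
  have h2 := Real.log_two_gt_d9
  linarith

/-- the second-moment rate of convergence of the speed: if `p ≤ p_d`
then `E|Δ n / n - (d-2)/d|^2 ≤ C * r n ^ (-2) * log n` for n ≥ 2, and if `p > p_d`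
then `E|Δ n / n - (d-2)/d|^2 ≤ C * r n ^ (-2)` for n ≥ 1 (stated in product form). -/
theorem erw_rate_upper_sq
    {G : Type*} [Group G] [DecidableEq G] {Ω : Type*} [MeasurableSpace Ω]
    {P : Measure Ω} [IsProbabilityMeasure P]
    (d : ℕ) (hd : 3 ≤ d) (p : ℝ) (hp0 : 0 ≤ p) (hp1 : p < 1)
    (E : ERW G d p Ω P) :
    (p ≤ ((d : ℝ) + 1) / (2 * d) →
      ∃ C : ℝ, 0 < C ∧ ∀ n : ℕ, 2 ≤ n →
        rate p d n ^ 2 *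
          ∫ ω, |(E.dist n ω : ℝ) / n - ((d : ℝ) - 2) / d| ^ 2 ∂P
            ≤ C * Real.log n) ∧
    (((d : ℝ) + 1) / (2 * d) < p →
      ∃ C : ℝ, 0 < C ∧ ∀ n : ℕ, 1 ≤ n →
        rate p d n ^ 2 *
          ∫ ω, |(E.dist n ω : ℝ) / n - ((d : ℝ) - 2) / d| ^ 2 ∂P ≤ C) := by
  have hd3 : (3 : ℝ) ≤ d := by exact_mod_cast hd
  set α := (p * d - 1) / ((d : ℝ) - 1) with hα
  have hαlow : -(1 / 2) ≤ α := by
    rw [hα, le_div_iff₀ (by linarith)]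
    nlinarith
  have hα1 : α < 1 := by
    rw [hα, div_lt_one (by linarith)]
    nlinarith
  have hrec : ∀ a ∈ E.S, ∀ n : ℕ, 1 ≤ n → ∫ ω, E.X (n + 1) a ω ^ 2 ∂P ≤
      (1 + 2 * α / n) * ∫ ω, E.X n a ω ^ 2 ∂P + 1 := fun a ha n hn => E.X_rec hd hn ha
  have hexp : (d : ℝ) * (1 - p) / ((d : ℝ) - 1) = 1 - α := by
    have : (d : ℝ) - 1 ≠ 0 := by linarith
    rw [hα]
    field_simp
    ring
  refine ⟨fun hp => ?_, fun hp => ?_⟩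
  · rcases lt_or_eq_of_le hp with hlt | heq
    · have hαs : α < 1 / 2 := by
        rw [lt_div_iff₀ (by linarith)] at hlt
        rw [hα, div_lt_iff₀ (by linarith)]
        linarith
      obtain ⟨K, hK, hb⟩ := E.core hd hp0 hp1 (C := max 1 (1 / (1 - 2 * α))) (h := fun _ => 1)
        (le_trans zero_le_one (le_max_left _ _))
        (fun a ha n hn => by
          have := erw_rec_sub hαlow hαs (x := fun n => ∫ ω, E.X n a ω ^ 2 ∂P) (E.X_one hd a)
            (hrec a ha) n hn
          simpa using this)
        (fun _ _ => le_rfl) (fun _ _ _ _ => le_rfl)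
      refine ⟨4 * K, by positivity, fun n hn => ?_⟩
      have hn0 : (0 : ℝ) < n := by positivity
      have hL := erw_log_two_le hn
      have hs := erw_sum_inv (by omega : 1 ≤ n)
      have hr : rate p d n ^ 2 = n := by
        rw [rate, if_pos hlt, Real.sq_sqrt hn0.le]
      rw [hr]
      calc (n : ℝ) * ∫ ω, |(E.dist n ω : ℝ) / n - ((d : ℝ) - 2) / d| ^ 2 ∂P
          ≤ n * (K * (1 + ∑ k ∈ Finset.Ico 1 n, 1 / (k : ℝ)) / n) := by
            gcongr
            exact hb n (by omega)
        _ = K * (1 + ∑ k ∈ Finset.Ico 1 n, 1 / (k : ℝ)) := by field_simp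
        _ ≤ K * (4 * Real.log n) := by
            gcongr
            linarith
        _ = _ := by ring
    · have hαs : α = 1 / 2 := by
        rw [hα, heq]
        have : (d : ℝ) - 1 ≠ 0 := by linarith
        field_simp
        ring
      obtain ⟨K, hK, hb⟩ := E.core hd hp0 hp1 (C := 1) (h := fun n => 1 + Real.log n)
        zero_le_one
        (fun a ha n hn => by
          have := erw_rec_crit (x := fun n => ∫ ω, E.X n a ω ^ 2 ∂P) (E.X_one hd a)
            (fun m hm => by
              have := hrec a ha m hm
              rw [hαs] at this
              norm_num at this ⊢
              exact this) n hn
          simpa using this)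
        (fun n hn => by
          have := Real.log_nonneg (by exact_mod_cast hn : (1 : ℝ) ≤ n)
          linarith)
        (fun m n hm hmn => by
          have : Real.log m ≤ Real.log n :=
            Real.log_le_log (by exact_mod_cast hm) (by exact_mod_cast hmn)
          linarith)
      refine ⟨12 * K, by positivity, fun n hn => ?_⟩
      have hn0 : (0 : ℝ) < n := by positivity
      have hL := erw_log_two_le hn
      have hs := erw_sum_inv (by omega : 1 ≤ n)
      have hr : rate p d n ^ 2 = n / Real.log n := by
        rw [rate, if_neg (by linarith), if_pos heq, Real.sq_sqrt (by positivity)]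
      rw [hr]
      set L := Real.log n with hLdef
      have hL0 : 0 < L := by linarith
      have hsum : ∑ k ∈ Finset.Ico 1 n, (1 + Real.log k) / (k : ℝ) ≤ (1 + L) * (1 + L) := by
        calc ∑ k ∈ Finset.Ico 1 n, (1 + Real.log k) / (k : ℝ)
            ≤ ∑ k ∈ Finset.Ico 1 n, (1 + L) * (1 / (k : ℝ)) := by
              refine Finset.sum_le_sum fun k hk => ?_
              obtain ⟨hk1, hk2⟩ := Finset.mem_Ico.1 hk
              have : Real.log k ≤ L :=
                Real.log_le_log (by exact_mod_cast hk1) (by exact_mod_cast hk2.le)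
              rw [mul_one_div]
              gcongr
          _ ≤ _ := by
              rw [← Finset.mul_sum]
              gcongr
      calc (n : ℝ) / L * ∫ ω, |(E.dist n ω : ℝ) / n - ((d : ℝ) - 2) / d| ^ 2 ∂P
          ≤ n / L * (K * ((1 + L) + ∑ k ∈ Finset.Ico 1 n, (1 + Real.log k) / (k : ℝ)) / n) := by
            gcongr
            exact hb n (by omega)
        _ = K * ((1 + L) + ∑ k ∈ Finset.Ico 1 n, (1 + Real.log k) / (k : ℝ)) / L := by
            field_simp
        _ ≤ K * ((1 + L) + (1 + L) * (1 + L)) / L := by gcongr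
        _ ≤ _ := by
            rw [div_le_iff₀ hL0]
            have : (1 + L) + (1 + L) * (1 + L) ≤ 12 * L * L := by nlinarith
            nlinarith
  · have hαs : 1 / 2 < α := by
      rw [div_lt_iff₀ (by linarith)] at hp
      rw [hα, lt_div_iff₀ (by linarith)]
      linarith
    have ha : 0 < 2 * α - 1 := by linarith
    obtain ⟨K, hK, hb⟩ := E.core hd hp0 hp1 (C := 1 + 1 / (2 * α - 1))
        (h := fun n => (n : ℝ) ^ (2 * α - 1)) (by positivity)
        (fun a ha n hn => by
          have := erw_rec_super hαs (x := fun n => ∫ ω, E.X n a ω ^ 2 ∂P) (E.X_one hd a)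
            (hrec a ha) n hn
          have hn0 : (0 : ℝ) < n := by exact_mod_cast hn
          have e : (n : ℝ) * (n : ℝ) ^ (2 * α - 1) = (n : ℝ) ^ (2 * α) := by
            rw [Real.rpow_sub_one hn0.ne']
            field_simp
          simp only [e]
          exact this)
        (fun n hn => Real.one_le_rpow (by exact_mod_cast hn) ha.le)
        (fun m n hm hmn => Real.rpow_le_rpow (by positivity) (by exact_mod_cast hmn) ha.le)
    refine ⟨K * (1 + 1 / (2 * α - 1)), by positivity, fun n hn => ?_⟩
    have hn0 : (0 : ℝ) < n := by exact_mod_cast hn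
    have hs := erw_sum_rpow ha (by linarith) hn
    have hr : rate p d n ^ 2 = (n : ℝ) ^ (2 - 2 * α) := by
      rw [rate, if_neg (by linarith), if_neg (by linarith), hexp, ← Real.rpow_natCast,
        ← Real.rpow_mul hn0.le]
      congr 1
      push_cast
      ring
    have e : (n : ℝ) ^ (2 - 2 * α) * ((n : ℝ) ^ (2 * α - 1) / n) = 1 := by
      rw [mul_div_assoc', ← Real.rpow_add hn0]
      have : 2 - 2 * α + (2 * α - 1) = 1 := by ring
      rw [this, Real.rpow_one, div_self hn0.ne']
    rw [hr]
    calc (n : ℝ) ^ (2 - 2 * α) * ∫ ω, |(E.dist n ω : ℝ) / n - ((d : ℝ) - 2) / d| ^ 2 ∂P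
        ≤ (n : ℝ) ^ (2 - 2 * α) * (K * ((n : ℝ) ^ (2 * α - 1) +
            ∑ k ∈ Finset.Ico 1 n, (k : ℝ) ^ (2 * α - 1) / k) / n) := by
          gcongr
          exact hb n hn
      _ ≤ (n : ℝ) ^ (2 - 2 * α) * (K * ((n : ℝ) ^ (2 * α - 1) +
            (n : ℝ) ^ (2 * α - 1) / (2 * α - 1)) / n) := by gcongr
      _ = K * (1 + 1 / (2 * α - 1)) * ((n : ℝ) ^ (2 - 2 * α) * ((n : ℝ) ^ (2 * α - 1) / n)) := by
          ring
      _ = _ := by rw [e, mul_one]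

end
end

section
/- For the elephant random walk with memory parameter p on a Cayley graph that is the d-regular tree T_d (d ≥ 3), if p ∈ [1/2, 1) or (p, d) = (0, 3), then there exists a constant C > 0 such that the return probability satisfies P(Δ_n = 0) ≤ C / n for all n ≥ 1. -/
open MeasureTheory ProbabilityTheory Filter

noncomputable section

theorem ineq_two_point (θ π : ℝ) (h0 : 0 ≤ π) (h1 : π ≤ 1) (c : ℝ) :
    π * Real.exp (θ * (1 - c)) + (1 - π) * Real.exp (θ * (0 - c))
      ≤ Real.exp (θ * (π - c) + θ ^ 2 / 2) := by
  have chord : ∀ x : ℝ, -1 ≤ x → x ≤ 1 → Real.exp (θ * x) ≤ (1 + x) / 2 * Real.exp θ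
      + (1 - x) / 2 * Real.exp (-θ) := by
    intro x hx hx'
    have := convexOn_exp.2 (Set.mem_univ θ) (Set.mem_univ (-θ))
      (by linarith : 0 ≤ (1 + x) / 2) (by linarith : 0 ≤ (1 - x) / 2) (by ring)
    simp only [smul_eq_mul] at this
    calc _ = _ := by congr 1; ring
      _ ≤ _ := this
  have a1 := chord (1 - π) (by linarith) (by linarith)
  have a2 := chord (0 - π) (by linarith) (by linarith)
  have a3 := Real.cosh_le_exp_half_sq θ
  rw [Real.cosh_eq] at a3
  have e1 : Real.exp (θ * (1 - c)) = Real.exp (θ * (π - c)) * Real.exp (θ * (1 - π)) := by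
    rw [← Real.exp_add]; congr 1; ring
  have e2 : Real.exp (θ * (0 - c)) = Real.exp (θ * (π - c)) * Real.exp (θ * (0 - π)) := by
    rw [← Real.exp_add]; congr 1; ring
  rw [e1, e2, Real.exp_add]
  have := Real.exp_pos (θ * (π - c))
  have key : π * Real.exp (θ * (1 - π)) + (1 - π) * Real.exp (θ * (0 - π)) ≤ Real.exp (θ ^ 2 / 2) := by
    nlinarith [mul_le_mul_of_nonneg_left a1 h0,
      mul_le_mul_of_nonneg_left a2 (by linarith : 0 ≤ 1 - π)]
  nlinarith [mul_le_mul_of_nonneg_left key this.le]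

/-- variance-proxy recursion -/
theorem rec_step (δ : ℝ) (h0 : 0 < δ) (h1 : δ ≤ 1 / 2) (K : ℝ) (hK : 1 ≤ 4 * δ ^ 2 * K) (n : ℕ) (hn : 1 ≤ n) :
    K * (n : ℝ) ^ 2 * (n : ℝ) ^ (-δ) * (1 + (1 - 2 * δ) / n) ^ 2 + 1 / 2
      ≤ K * ((n + 1 : ℕ) : ℝ) ^ 2 * ((n + 1 : ℕ) : ℝ) ^ (-δ) := by
  have hn' : (1 : ℝ) ≤ n := by exact_mod_cast hn
  have hK0 : 0 < K := by by_contra h; push Not at h; nlinarith [sq_nonneg δ]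
  push_cast
  generalize (n : ℝ) = x at hn' ⊢
  have hx0 : 0 < x := by linarith
  -- compare powers
  have hix : 0 < 1 / x := by positivity
  have hb : (1 + 1 / x) ^ δ ≤ 1 + δ * (1 / x) :=
    rpow_one_add_le_one_add_mul_self (by linarith) h0.le (by linarith)
  have hy : x ^ (-δ) * (x / (x + δ)) ≤ (x + 1) ^ (-δ) := by
    have e : x + 1 = x * (1 + 1 / x) := by field_simp
    rw [e, Real.mul_rpow hx0.le (by positivity)]
    refine mul_le_mul_of_nonneg_left ?_ (by positivity)
    rw [Real.rpow_neg (by positivity)]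
    have : x / (x + δ) = (1 + δ * (1 / x))⁻¹ := by field_simp
    rw [this]
    exact inv_anti₀ (by positivity) hb
  have hlow : 1 / x ≤ x ^ (-δ) := by
    have := Real.rpow_le_rpow_of_exponent_le hn' (by linarith : (-1:ℝ) ≤ -δ)
    rwa [Real.rpow_neg_one, ← one_div] at this
  set y := x ^ (-δ) with hydef
  have hy0 : 0 < y := by positivity
  have e1 : K * x ^ 2 * y * (1 + (1 - 2 * δ) / x) ^ 2 = K * y * (x + 1 - 2 * δ) ^ 2 := by
    field_simp; ring
  have e2 : K * (x + 1) ^ 2 * (y * (x / (x + δ))) ≤ K * (x + 1) ^ 2 * (x + 1) ^ (-δ) :=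
    mul_le_mul_of_nonneg_left hy (by positivity)
  refine le_trans ?_ e2
  rw [e1]
  have e3 : (x + 1 - 2 * δ) ^ 2 + 2 * δ ^ 2 * x ≤ (x + 1) ^ 2 * (x / (x + δ)) := by
    rw [← mul_div_assoc, le_div_iff₀ (by linarith)]
    have p1 : 0 ≤ x - 1 := by linarith
    have p2 : 0 ≤ 1 / 2 - δ := by linarith
    have q : (x + 1) ^ 2 ≤ (x + δ) * (4 * x + 4 - 4 * δ - 2 * δ * x) := by
      have q1 : 3 * x + 2 ≤ 4 * x + 4 - 4 * δ - 2 * δ * x := by nlinarith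
      have q2 := mul_le_mul_of_nonneg_left q1 (by linarith : 0 ≤ x + δ)
      nlinarith
    nlinarith [mul_le_mul_of_nonneg_left q h0.le]
  have e4 : 1 ≤ y * x := by rw [div_le_iff₀ hx0] at hlow; exact hlow
  have := mul_le_mul_of_nonneg_left e3 (by positivity : 0 ≤ K * y)
  have : 1/2 ≤ K * y * (2 * δ ^ 2 * x) := by
    have : 1 * 1 ≤ (4 * δ ^ 2 * K) * (y * x) := mul_le_mul hK e4 (by norm_num) (by positivity)
    nlinarith
  linarith

theorem summ_exp (c δ : ℝ) (hc : 0 < c) (hδ : 0 < δ) :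
    Summable (fun n : ℕ => Real.exp (-c * (n : ℝ) ^ δ)) := by
  have h := (isLittleO_exp_neg_mul_rpow_atTop hc (-(2 / δ))).isBigO
  have t : Tendsto (fun n : ℕ => (n : ℝ) ^ δ) atTop atTop :=
    (tendsto_rpow_atTop hδ).comp tendsto_natCast_atTop_atTop
  have h2 := h.comp_tendsto t
  refine summable_of_isBigO_nat (g := fun n : ℕ => (n : ℝ) ^ (-2 : ℝ))
    (Real.summable_nat_rpow.2 (by norm_num)) ?_
  refine h2.congr (fun n => by simp [Function.comp]) (fun n => ?_)
  simp only [Function.comp]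
  rw [← Real.rpow_mul (by positivity)]
  congr 1
  field_simp

theorem tree_gamma {V : Type*} {Gr : SimpleGraph V} (h : Gr.IsTree) (r x : V) :
    ∃ γ : V, ∀ y, Gr.Adj x y → y ≠ γ → Gr.dist r x + 1 ≤ Gr.dist r y := by
  classical
  obtain ⟨q, hq, -⟩ := h.existsUnique_path r x
  refine ⟨q.penultimate, fun y hxy hy => ?_⟩
  have hd := h.dist_eq_dist_add_one_of_adj r hxy
  by_contra hlt
  have hyx : Gr.dist r x = Gr.dist r y + 1 := by omega
  obtain ⟨w, hw, hwl⟩ := h.1.exists_path_of_dist r y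
  have hx : x ∉ w.support := by
    intro hx
    have := Gr.dist_le (w.takeUntil x hx)
    have := w.length_takeUntil_le_length hx
    omega
  have hp : (w.concat hxy.symm).IsPath := hw.concat hx hxy.symm
  have e := h.2.path_unique ⟨q, hq⟩ ⟨_, hp⟩
  have e' : q = w.concat hxy.symm := congrArg Subtype.val e
  apply hy
  rw [e']
  simp

namespace ERWaux

variable {G : Type*} [Group G] [DecidableEq G] {d : ℕ} {p : ℝ}
  {Ω : Type*} [MeasurableSpace Ω] {P : Measure Ω}

/-- history of the first `n` steps, most recent first -/
def hist (E : ERW G d p Ω P) : ℕ → Ω → List G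
  | 0 => fun _ => []
  | n + 1 => fun ω => E.g (n + 1) ω :: hist E n ω

/-- lists of length `n` over `S` -/
def Ls (S : Finset G) : ℕ → Finset (List G)
  | 0 => {[]}
  | n + 1 => (S ×ˢ Ls S n).image fun x => x.1 :: x.2

/-- centred count -/
def Y (d : ℕ) (a : G) (l : List G) : ℝ := (l.count a : ℝ) - l.length / d

/-- conditional probability of next step `a` -/
def pr (d : ℕ) (p : ℝ) (a : G) (l : List G) : ℝ :=
  1 / d + (p - (1 - p) / ((d : ℝ) - 1)) * (Y d a l / l.length)

/-- expectation of a functional of the history -/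
def Ex (E : ERW G d p Ω P) (n : ℕ) (f : List G → ℝ) : ℝ :=
  ∑ l ∈ Ls E.S n, P.real {ω | hist E n ω = l} * f l

theorem mem_Ls {S : Finset G} {n : ℕ} {l : List G} (h : l ∈ Ls S n) :
    l.length = n ∧ ∀ x ∈ l, x ∈ S := by
  induction n generalizing l with
  | zero => simp [Ls] at h; subst h; simp
  | succ n ih =>
    simp only [Ls, Finset.mem_image, Finset.mem_product, Prod.exists] at h
    obtain ⟨a, m, ⟨ha, hm⟩, rfl⟩ := h
    obtain ⟨h1, h2⟩ := ih hm
    refine ⟨by simp [h1], ?_⟩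
    intro x hx
    rcases List.mem_cons.1 hx with rfl | hx
    · exact ha
    · exact h2 x hx

theorem hist_mem (E : ERW G d p Ω P) (n : ℕ) (ω : Ω) : hist E n ω ∈ Ls E.S n := by
  induction n with
  | zero => simp [hist, Ls]
  | succ n ih =>
    simp only [Ls, Finset.mem_image, Finset.mem_product, Prod.exists, hist]
    exact ⟨_, _, ⟨E.mem_S _ (by omega) ω, ih⟩, rfl⟩

theorem hist_eq_iff (E : ERW G d p Ω P) (n : ℕ) (ω ω' : Ω) :
    hist E n ω = hist E n ω' ↔ ∀ k ∈ Finset.Icc 1 n, E.g k ω = E.g k ω' := by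
  induction n with
  | zero => simp [hist]
  | succ n ih =>
    simp only [hist, List.cons.injEq, ih, Finset.mem_Icc]
    constructor
    · rintro ⟨h1, h2⟩ k ⟨hk, hk'⟩
      rcases Nat.lt_or_ge n k with h | h
      · have : k = n + 1 := by omega
        subst this; exact h1
      · exact h2 k ⟨hk, h⟩
    · intro h
      exact ⟨h _ ⟨by omega, le_rfl⟩, fun k hk => h k ⟨hk.1, by omega⟩⟩

theorem hist_count (E : ERW G d p Ω P) (n : ℕ) (ω : Ω) (a : G) :
    ((Finset.Icc 1 n).filter fun k => E.g k ω = a).card = (hist E n ω).count a := by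
  induction n with
  | zero => simp [hist]
  | succ n ih =>
    rw [← Finset.insert_Icc_right_eq_Icc_add_one (by omega), Finset.filter_insert]
    simp only [hist, List.count_cons, ← ih, beq_iff_eq]
    split_ifs with h
    · rw [Finset.card_insert_of_notMem (by simp)]
    · rfl

theorem hist_prod (E : ERW G d p Ω P) (n : ℕ) (ω : Ω) : E.pos n ω = (hist E n ω).prod := by
  induction n with
  | zero => simp [hist, ERW.pos]
  | succ n ih => simp [hist, ERW.pos, ih]

theorem prob_cons [IsProbabilityMeasure P] (hd : 3 ≤ d) (E : ERW G d p Ω P) (n : ℕ) (a : G)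
    (ha : a ∈ E.S) (l : List G) :
    P.real {ω | hist E (n + 1) ω = a :: l} = pr d p a l * P.real {ω | hist E n ω = l} := by
  have hd' : (3 : ℝ) ≤ d := by exact_mod_cast hd
  by_cases hne : ∃ ω₀, hist E n ω₀ = l
  · obtain ⟨ω₀, rfl⟩ := hne
    have hlen := (mem_Ls (hist_mem E n ω₀)).1
    rcases Nat.eq_zero_or_pos n with rfl | hn
    · have := E.init a ha
      simp [hist, pr, Measure.real] at this ⊢
      exact this
    · have := E.update n hn (fun k => E.g k ω₀) a ha
      have s1 : {ω | ∀ k ∈ Finset.Icc 1 n, E.g k ω = E.g k ω₀} = {ω | hist E n ω = hist E n ω₀} := by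
        ext ω; exact (hist_eq_iff E n ω ω₀).symm
      have s2 : {ω | hist E (n + 1) ω = a :: hist E n ω₀}
          = {ω | hist E n ω = hist E n ω₀} ∩ {ω | E.g (n + 1) ω = a} := by
        ext ω; simp [hist, and_comm]
      simp only [s1, hist_count] at this
      rw [s2]
      simp only [Measure.real]
      rw [this]
      congr 1
      simp only [pr, Y, hlen]
      have : (0 : ℝ) < n := by exact_mod_cast hn
      have : (d : ℝ) - 1 ≠ 0 := by linarith
      field_simp
      ring
  · push Not at hne
    have h1 : {ω | hist E n ω = l} = ∅ := by ext ω; simp [hne ω]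
    have h2 : {ω | hist E (n + 1) ω = a :: l} = ∅ := by ext ω; simp [hist, hne ω]
    rw [h1, h2]; simp

theorem Ex_zero [IsProbabilityMeasure P] (E : ERW G d p Ω P) (f : List G → ℝ) :
    Ex E 0 f = f [] := by
  simp [Ex, Ls, hist]

theorem Ex_succ [IsProbabilityMeasure P] (hd : 3 ≤ d) (E : ERW G d p Ω P) (n : ℕ)
    (f : List G → ℝ) :
    Ex E (n + 1) f = Ex E n (fun l => ∑ a ∈ E.S, pr d p a l * f (a :: l)) := by
  unfold Ex
  conv_lhs => rw [Ls]
  rw [Finset.sum_image (by rintro ⟨a, l⟩ _ ⟨b, m⟩ _ h; simpa using h), Finset.sum_product_right]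
  refine Finset.sum_congr rfl fun l _ => ?_
  rw [Finset.mul_sum]
  refine Finset.sum_congr rfl fun a ha => ?_
  simp only
  rw [prob_cons hd E n a ha l]
  ring

theorem Ex_mono (E : ERW G d p Ω P) (n : ℕ) {f g : List G → ℝ}
    (h : ∀ l, l.length = n → (∀ x ∈ l, x ∈ E.S) → f l ≤ g l) : Ex E n f ≤ Ex E n g :=
  Finset.sum_le_sum fun l hl => mul_le_mul_of_nonneg_left
    (h l (mem_Ls hl).1 (mem_Ls hl).2) measureReal_nonneg

theorem Ex_add (E : ERW G d p Ω P) (n : ℕ) (f g : List G → ℝ) :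
    Ex E n (fun l => f l + g l) = Ex E n f + Ex E n g := by
  simp [Ex, mul_add, Finset.sum_add_distrib]

theorem Ex_sum (E : ERW G d p Ω P) (n : ℕ) {ι : Type*} (s : Finset ι) (f : ι → List G → ℝ) :
    Ex E n (fun l => ∑ i ∈ s, f i l) = ∑ i ∈ s, Ex E n (f i) := by
  simp only [Ex, Finset.mul_sum]
  exact Finset.sum_comm

theorem Ex_mul (E : ERW G d p Ω P) (n : ℕ) (c : ℝ) (f : List G → ℝ) :
    Ex E n (fun l => c * f l) = c * Ex E n f := by
  simp only [Ex, Finset.mul_sum]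
  exact Finset.sum_congr rfl fun _ _ => by ring

theorem prob_le_Ex [IsProbabilityMeasure P] (E : ERW G d p Ω P) (n : ℕ) (A : Set Ω)
    (f : List G → ℝ) (hf : ∀ l, l.length = n → (∀ x ∈ l, x ∈ E.S) → 0 ≤ f l)
    (h : ∀ ω ∈ A, 1 ≤ f (hist E n ω)) : P.real A ≤ Ex E n f := by
  classical
  have hsub : A ⊆ ⋃ l ∈ (Ls E.S n).filter (fun l => 1 ≤ f l), {ω | hist E n ω = l} := by
    intro ω hω
    simp only [Set.mem_iUnion, Finset.mem_filter]
    exact ⟨_, ⟨hist_mem E n ω, h ω hω⟩, rfl⟩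
  calc P.real A ≤ P.real (⋃ l ∈ (Ls E.S n).filter (fun l => 1 ≤ f l), {ω | hist E n ω = l}) :=
        measureReal_mono hsub (measure_ne_top _ _)
    _ ≤ ∑ l ∈ (Ls E.S n).filter (fun l => 1 ≤ f l), P.real {ω | hist E n ω = l} :=
        measureReal_biUnion_finset_le _ _
    _ ≤ ∑ l ∈ (Ls E.S n).filter (fun l => 1 ≤ f l), P.real {ω | hist E n ω = l} * f l := by
        refine Finset.sum_le_sum fun l hl => ?_
        exact le_mul_of_one_le_right measureReal_nonneg (Finset.mem_filter.1 hl).2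
    _ ≤ Ex E n f := by
        refine Finset.sum_le_sum_of_subset_of_nonneg (Finset.filter_subset _ _) fun l hl _ => ?_
        exact mul_nonneg measureReal_nonneg (hf l (mem_Ls hl).1 (mem_Ls hl).2)

theorem sum_count {S : Finset G} (l : List G) (h : ∀ x ∈ l, x ∈ S) :
    ∑ a ∈ S, l.count a = l.length := by
  induction l with
  | nil => simp
  | cons b l ih =>
    simp only [List.mem_cons, forall_eq_or_imp] at h
    simp only [List.count_cons, Finset.sum_add_distrib, ih h.2, beq_iff_eq]
    simp [h.1]

theorem pr_sum (hd : 3 ≤ d) (E : ERW G d p Ω P) (l : List G) (h : ∀ x ∈ l, x ∈ E.S) :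
    ∑ a ∈ E.S, pr d p a l = 1 := by
  have hd' : (3 : ℝ) ≤ d := by exact_mod_cast hd
  have hc : (∑ a ∈ E.S, (l.count a : ℝ)) = l.length := by exact_mod_cast sum_count l h
  simp only [pr, Finset.sum_add_distrib, ← Finset.mul_sum, ← Finset.sum_div, Y,
    Finset.sum_sub_distrib, hc, Finset.sum_const, E.card_S, nsmul_eq_mul]
  have : (d : ℝ) ≠ 0 := by linarith
  field_simp
  simp

theorem pr_nonneg (hd : 3 ≤ d) (hp0 : 0 ≤ p) (hp1 : p < 1) (a : G) (l : List G) :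
    0 ≤ pr d p a l := by
  have hd' : (3 : ℝ) ≤ d := by exact_mod_cast hd
  rcases eq_or_ne l [] with rfl | hl
  · simp [pr]
  have h0 : (0 : ℝ) < l.length := by exact_mod_cast List.length_pos_iff.2 hl
  have h1 : (l.count a : ℝ) ≤ l.length := by exact_mod_cast List.count_le_length
  have h2 : (0 : ℝ) ≤ l.count a := by positivity
  have hd1 : (0 : ℝ) < (d : ℝ) - 1 := by linarith
  have e : pr d p a l = (p * l.count a + (1 - p) / ((d : ℝ) - 1) * (l.length - l.count a)) / l.length := by
    simp only [pr, Y]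
    field_simp
    ring
  rw [e]
  have : 0 ≤ (1 - p) / ((d : ℝ) - 1) := div_nonneg (by linarith) hd1.le
  have := mul_nonneg this (sub_nonneg.2 h1)
  positivity

/-- the memory coefficient has absolute value less than one -/
theorem alpha_bd (hd : 3 ≤ d) (hp0 : 0 ≤ p) (hp1 : p < 1) :
    |p - (1 - p) / ((d : ℝ) - 1)| < 1 := by
  have hd' : (3 : ℝ) ≤ d := by exact_mod_cast hd
  have hd1 : (0 : ℝ) < (d : ℝ) - 1 := by linarith
  have h1 : 0 < (1 - p) / ((d : ℝ) - 1) := div_pos (by linarith) hd1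
  have h2 : (1 - p) / ((d : ℝ) - 1) < 1 := by rw [div_lt_one hd1]; linarith
  rw [abs_lt]; constructor <;> linarith

theorem sum_split (E : ERW G d p Ω P) (a : G) (ha : a ∈ E.S) (w : G → ℝ) (hw : ∑ b ∈ E.S, w b = 1)
    (x y : ℝ) : ∑ b ∈ E.S, w b * (if b = a then x else y) = w a * x + (1 - w a) * y := by
  rw [← Finset.add_sum_erase _ _ ha] at hw ⊢
  rw [if_pos rfl]
  congr 1
  rw [← hw, add_sub_cancel_left, Finset.sum_mul]
  refine Finset.sum_congr rfl fun b hb => ?_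
  rw [if_neg (Finset.ne_of_mem_erase hb)]

theorem mgf_step [IsProbabilityMeasure P] (hd : 3 ≤ d) (hp0 : 0 ≤ p) (hp1 : p < 1)
    (E : ERW G d p Ω P) (a : G) (ha : a ∈ E.S) (n : ℕ) (θ : ℝ) :
    Ex E (n + 1) (fun l => Real.exp (θ * Y d a l)) ≤
      Real.exp (θ ^ 2 / 2) * Ex E n (fun l => Real.exp
        ((θ * (1 + (p - (1 - p) / ((d : ℝ) - 1)) / n)) * Y d a l)) := by
  rw [Ex_succ hd, ← Ex_mul]
  refine Ex_mono E n fun l hl hS => ?_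
  have hsum := pr_sum hd E l hS
  have hle : pr d p a l ≤ 1 := by
    rw [← hsum]
    exact Finset.single_le_sum (f := fun a => pr d p a l)
      (fun b _ => pr_nonneg hd hp0 hp1 b l) ha
  have key := ineq_two_point θ (pr d p a l) (pr_nonneg hd hp0 hp1 a l) hle (1 / d)
  have e : ∀ b, pr d p b l * Real.exp (θ * Y d a (b :: l)) =
      Real.exp (θ * Y d a l) * (pr d p b l *
        (if b = a then Real.exp (θ * (1 - 1 / d)) else Real.exp (θ * (0 - 1 / d)))) := by
    intro b
    have : Y d a (b :: l) = Y d a l + ((if b = a then 1 else 0) - 1 / d) := by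
      simp only [Y, List.count_cons, List.length_cons, beq_iff_eq]
      push_cast
      ring
    rw [this, mul_add, Real.exp_add]
    split_ifs <;> ring
  rw [Finset.sum_congr rfl fun b _ => e b, ← Finset.mul_sum,
    sum_split E a ha (fun b => pr d p b l) hsum]
  refine (mul_le_mul_of_nonneg_left key (Real.exp_pos _).le).trans (le_of_eq ?_)
  rw [← Real.exp_add, ← Real.exp_add]
  congr 1
  simp only [pr, hl]
  ring

theorem mgf_bound [IsProbabilityMeasure P] (hd : 3 ≤ d) (hp0 : 0 ≤ p) (hp1 : p < 1)
    (E : ERW G d p Ω P) (a : G) (ha : a ∈ E.S) (δ K : ℝ) (h0 : 0 < δ) (h1 : δ ≤ 1 / 2)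
    (hK : 1 ≤ 4 * δ ^ 2 * K)
    (hα : |p - (1 - p) / ((d : ℝ) - 1)| ≤ 1 - 2 * δ) (n : ℕ) (hn : 1 ≤ n) (θ : ℝ) :
    Ex E n (fun l => Real.exp (θ * Y d a l)) ≤
      Real.exp (K * (n : ℝ) ^ 2 * (n : ℝ) ^ (-δ) * θ ^ 2) := by
  have hK1 : 1 / 2 ≤ K := by
    by_contra h
    push Not at h
    have : δ ^ 2 ≤ 1 / 4 := by nlinarith
    nlinarith [sq_nonneg δ]
  induction n, hn using Nat.le_induction generalizing θ with
  | base =>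
    refine (mgf_step hd hp0 hp1 E a ha 0 θ).trans ?_
    rw [Ex_zero]
    simp [Y]
    nlinarith [sq_nonneg θ]
  | succ n hn ih =>
    refine (mgf_step hd hp0 hp1 E a ha n θ).trans ?_
    refine (mul_le_mul_of_nonneg_left (ih _) (Real.exp_pos _).le).trans ?_
    rw [← Real.exp_add]
    apply Real.exp_le_exp.2
    have hn' : (1 : ℝ) ≤ n := by exact_mod_cast hn
    have r := rec_step δ h0 h1 K hK n hn
    generalize p - (1 - p) / ((d : ℝ) - 1) = α at *
    have hsq : (1 + α / n) ^ 2 ≤ (1 + (1 - 2 * δ) / n) ^ 2 := by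
      apply sq_le_sq'
      · have : -1 / (n : ℝ) ≤ α / n := by
          apply div_le_div_of_nonneg_right _ (by linarith)
          linarith [neg_abs_le α]
        have : -1 / (n : ℝ) ≥ -1 := by
          rw [ge_iff_le, le_div_iff₀ (by linarith)]; linarith
        have : 0 ≤ (1 - 2 * δ) / n := div_nonneg (by linarith) (by linarith)
        linarith
      · gcongr
        exact (le_abs_self α).trans hα
    have hc : 0 ≤ K * (n : ℝ) ^ 2 * (n : ℝ) ^ (-δ) := by positivity
    have := mul_le_mul_of_nonneg_left hsq hc
    calc _ = (K * (n : ℝ) ^ 2 * (n : ℝ) ^ (-δ) * (1 + α / n) ^ 2 + 1 / 2) * θ ^ 2 := by ring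
      _ ≤ _ := mul_le_mul_of_nonneg_right (by linarith) (sq_nonneg θ)

/-- some step has conditional probability exceeding `2/5` -/
def bad (S : Finset G) (d : ℕ) (p : ℝ) (l : List G) : Prop := ∃ a ∈ S, 2 / 5 < pr d p a l

open Classical in
/-- indicator of `bad` -/
def badI (S : Finset G) (d : ℕ) (p : ℝ) (l : List G) : ℕ := if bad S d p l then 1 else 0

/-- number of bad times -/
def nb (S : Finset G) (d : ℕ) (p : ℝ) : List G → ℕ
  | [] => 0
  | _ :: l => nb S d p l + badI S d p l

open Classical in
/-- compensator -/
def v (S : Finset G) (d : ℕ) (p : ℝ) : List G → ℝ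
  | [] => 1
  | _ :: l => v S d p l * (if bad S d p l then 4 / 5 else 50 / 49)

theorem badI_le (hd : 3 ≤ d) (hp0 : 0 ≤ p) (hp1 : p < 1) (S : Finset G) (l : List G) (θ : ℝ)
    (hθ : 0 ≤ θ) :
    (badI S d p l : ℝ) ≤ ∑ a ∈ S, Real.exp (-(θ * (l.length / 15))) *
      (Real.exp (θ * Y d a l) + Real.exp ((-θ) * Y d a l)) := by
  have hd' : (3 : ℝ) ≤ d := by exact_mod_cast hd
  unfold badI
  split_ifs with h
  · obtain ⟨a, ha, hpr⟩ := h
    refine le_trans ?_ (Finset.single_le_sum (f := fun a => Real.exp (-(θ * (l.length / 15))) *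
      (Real.exp (θ * Y d a l) + Real.exp ((-θ) * Y d a l))) (fun b _ => by positivity) ha)
    have hY : (l.length : ℝ) / 15 ≤ |Y d a l| := by
      have hα := alpha_bd hd hp0 hp1
      unfold pr at hpr
      have h13 : 1 / (d : ℝ) ≤ 1 / 3 := one_div_le_one_div_of_le (by norm_num) hd'
      have h1 : 1 / 15 < (p - (1 - p) / ((d : ℝ) - 1)) * (Y d a l / l.length) := by linarith
      have h2 := h1.trans_le (le_abs_self _)
      rw [abs_mul, abs_div, Nat.abs_cast] at h2
      have h3 : 1 / 15 < |Y d a l| / l.length := h2.trans_le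
        (mul_le_of_le_one_left (by positivity) hα.le)
      rcases Nat.eq_zero_or_pos l.length with h0 | h0
      · rw [h0]; simp
      · have h0' : (0 : ℝ) < l.length := by exact_mod_cast h0
        rw [lt_div_iff₀ h0'] at h3
        linarith
    rw [mul_add, ← Real.exp_add, ← Real.exp_add]
    push_cast
    rcases le_abs.1 hY with hY | hY
    · have : (1 : ℝ) ≤ Real.exp (-(θ * (l.length / 15)) + θ * Y d a l) :=
        Real.one_le_exp (by nlinarith)
      linarith [Real.exp_pos (-(θ * (l.length / 15)) + (-θ) * Y d a l)]
    · have : (1 : ℝ) ≤ Real.exp (-(θ * (l.length / 15)) + (-θ) * Y d a l) :=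
        Real.one_le_exp (by nlinarith)
      linarith [Real.exp_pos (-(θ * (l.length / 15)) + θ * Y d a l)]
  · push_cast
    exact Finset.sum_nonneg fun a _ => by positivity

theorem Ex_badI [IsProbabilityMeasure P] (hd : 3 ≤ d) (hp0 : 0 ≤ p) (hp1 : p < 1)
    (E : ERW G d p Ω P) : ∃ δ c : ℝ, 0 < δ ∧ 0 < c ∧ ∀ n : ℕ, 1 ≤ n →
      Ex E n (fun l => (badI E.S d p l : ℝ)) ≤ 2 * d * Real.exp (-c * (n : ℝ) ^ δ) := by
  have hα := alpha_bd hd hp0 hp1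
  set δ : ℝ := (1 - |p - (1 - p) / ((d : ℝ) - 1)|) / 2 with hδ
  have h0 : 0 < δ := by rw [hδ]; linarith
  have h1 : δ ≤ 1 / 2 := by rw [hδ]; linarith [abs_nonneg (p - (1 - p) / ((d : ℝ) - 1))]
  set K : ℝ := 1 / (4 * δ ^ 2) with hK
  have hK0 : 0 < K := by positivity
  have hK1 : 1 ≤ 4 * δ ^ 2 * K := by rw [hK]; field_simp; exact le_rfl
  refine ⟨δ, 1 / (900 * K), h0, by positivity, fun n hn => ?_⟩
  have hn' : (0 : ℝ) < n := by exact_mod_cast hn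
  set θ : ℝ := (n : ℝ) ^ δ / (30 * K * n) with hθ
  have hθ0 : 0 ≤ θ := by positivity
  have hm := fun a ha => mgf_bound hd hp0 hp1 E a ha δ K h0 h1 hK1 (by rw [hδ]; linarith) n hn
  calc Ex E n (fun l => (badI E.S d p l : ℝ))
      ≤ Ex E n (fun l => ∑ a ∈ E.S, Real.exp (-(θ * (n / 15))) *
      (Real.exp (θ * Y d a l) + Real.exp ((-θ) * Y d a l))) := by
        refine Ex_mono E n fun l hl _ => ?_
        have := badI_le hd hp0 hp1 E.S l θ hθ0
        rwa [hl] at this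
    _ = ∑ a ∈ E.S, Real.exp (-(θ * (n / 15))) * (Ex E n (fun l => Real.exp (θ * Y d a l))
          + Ex E n (fun l => Real.exp ((-θ) * Y d a l))) := by
        rw [Ex_sum]
        refine Finset.sum_congr rfl fun a _ => ?_
        rw [Ex_mul, Ex_add]
    _ ≤ ∑ a ∈ E.S, 2 * Real.exp (-(1 / (900 * K)) * (n : ℝ) ^ δ) := by
        refine Finset.sum_le_sum fun a ha => ?_
        have m1 := hm a ha θ
        have m2 := hm a ha (-θ)
        rw [neg_sq] at m2
        have e : Real.exp (-(1 / (900 * K)) * (n : ℝ) ^ δ) = Real.exp (-(θ * (n / 15))) *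
            Real.exp (K * (n : ℝ) ^ 2 * (n : ℝ) ^ (-δ) * θ ^ 2) := by
          rw [← Real.exp_add]
          congr 1
          rw [Real.rpow_neg hn'.le, hθ]
          have : (0 : ℝ) < (n : ℝ) ^ δ := by positivity
          generalize (n : ℝ) ^ δ = y at *
          field_simp
          ring
        rw [e]
        have := mul_le_mul_of_nonneg_left (add_le_add m1 m2) (Real.exp_pos (-(θ * (n / 15)))).le
        linarith
    _ = _ := by rw [Finset.sum_const, E.card_S, nsmul_eq_mul]; ring

theorem Ex_nb [IsProbabilityMeasure P] (hd : 3 ≤ d) (E : ERW G d p Ω P) (n : ℕ) :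
    Ex E n (fun l => (nb E.S d p l : ℝ)) =
      ∑ k ∈ Finset.range n, Ex E k (fun l => (badI E.S d p l : ℝ)) := by
  induction n with
  | zero => simp [Ex_zero, nb]
  | succ n ih =>
    rw [Finset.sum_range_succ, ← ih, Ex_succ hd, ← Ex_add]
    unfold Ex
    refine Finset.sum_congr rfl fun l hl => ?_
    congr 1
    simp only [nb]
    rw [← Finset.sum_mul, pr_sum hd E l (mem_Ls hl).2, one_mul]
    push_cast
    rfl

theorem v_pos (S : Finset G) (l : List G) : 0 < v S d p l := by
  induction l with
  | nil => simp [v]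
  | cons a l ih => simp only [v]; split_ifs <;> positivity

theorem v_low (S : Finset G) (l : List G) :
    (101 / 100 : ℝ) ^ (2 * l.length) ≤ v S d p l * (101 / 100) ^ (26 * nb S d p l) := by
  induction l with
  | nil => simp [v, nb]
  | cons a l ih =>
    simp only [v, nb, badI, List.length_cons]
    have hv := v_pos (d := d) (p := p) S l
    have hq : (0 : ℝ) < (101 / 100) ^ (26 * nb S d p l) := by positivity
    rw [mul_add 2, pow_add]
    refine (mul_le_mul_of_nonneg_right ih (by positivity)).trans ?_
    split_ifs with h
    · rw [mul_add 26, pow_add]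
      have : (101 / 100 : ℝ) ^ (2 * 1) ≤ 4 / 5 * (101 / 100) ^ (26 * 1) := by norm_num
      have := mul_le_mul_of_nonneg_left this (mul_pos hv hq).le
      linarith
    · have : (101 / 100 : ℝ) ^ (2 * 1) ≤ 50 / 49 := by norm_num
      have := mul_le_mul_of_nonneg_left this (mul_pos hv hq).le
      simp only [add_zero]
      linarith

theorem drift_step (hd : 3 ≤ d) (hp0 : 0 ≤ p) (hp1 : p < 1)
    (E : ERW G d p Ω P) (l : List G) (hS : ∀ x ∈ l, x ∈ E.S) :
    ∑ a ∈ E.S, pr d p a l * ((4 / 5 : ℝ) ^ (cayleyGraph E.S).dist 1 (a :: l).prod *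
      v E.S d p (a :: l)) ≤ (4 / 5 : ℝ) ^ (cayleyGraph E.S).dist 1 l.prod * v E.S d p l := by
  have hsum := pr_sum hd E l hS
  have hadj : ∀ a ∈ E.S, (cayleyGraph E.S).Adj l.prod (a * l.prod) := by
    intro a ha
    refine ⟨fun h => E.one_not_mem ?_, Or.inl (by simpa using ha)⟩
    have : a = 1 := by simpa using h
    rwa [← this]
  set D := (cayleyGraph E.S).dist 1 l.prod with hD
  have hv := v_pos (d := d) (p := p) E.S l
  have hdown : ∀ a ∈ E.S,
      (4 / 5 : ℝ) ^ (cayleyGraph E.S).dist 1 (a * l.prod) ≤ 5 / 4 * (4 / 5) ^ D := by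
    intro a ha
    have h1 : D ≤ (cayleyGraph E.S).dist 1 (a * l.prod) + 1 := by
      have := E.tree.dist_eq_dist_add_one_of_adj 1 (hadj a ha)
      omega
    have := pow_le_pow_of_le_one (by norm_num : (0 : ℝ) ≤ 4 / 5) (by norm_num) h1
    rw [pow_succ] at this
    linarith
  have hDp : (0 : ℝ) < (4 / 5) ^ D := by positivity
  simp only [v, List.prod_cons]
  by_cases hb : bad E.S d p l
  · simp only [if_pos hb]
    calc _ ≤ ∑ a ∈ E.S, pr d p a l * ((4 / 5) ^ D * v E.S d p l) := by
          refine Finset.sum_le_sum fun a ha => mul_le_mul_of_nonneg_left ?_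
            (pr_nonneg hd hp0 hp1 a l)
          have := mul_le_mul_of_nonneg_right (hdown a ha) (by positivity : 0 ≤ v E.S d p l * (4 / 5))
          linarith
      _ = _ := by rw [← Finset.sum_mul, hsum, one_mul]
  · simp only [if_neg hb]
    obtain ⟨γ, hγ⟩ := tree_gamma E.tree 1 l.prod
    have hup : ∀ a ∈ E.S, a ≠ γ * l.prod⁻¹ →
        (4 / 5 : ℝ) ^ (cayleyGraph E.S).dist 1 (a * l.prod) ≤ 4 / 5 * (4 / 5) ^ D := by
      intro a ha hne
      have h1 := hγ _ (hadj a ha) (fun h => hne (by rw [← h]; group))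
      have := pow_le_pow_of_le_one (by norm_num : (0 : ℝ) ≤ 4 / 5) (by norm_num) h1
      rw [pow_succ] at this
      linarith
    set c := γ * l.prod⁻¹ with hc
    have main : ∑ a ∈ E.S, pr d p a l * (4 / 5 : ℝ) ^ (cayleyGraph E.S).dist 1 (a * l.prod)
        ≤ 49 / 50 * (4 / 5) ^ D := by
      by_cases hcS : c ∈ E.S
      · have hπ : pr d p c l ≤ 2 / 5 := by
          by_contra h
          push Not at h
          exact hb ⟨c, hcS, h⟩
        calc _ ≤ ∑ a ∈ E.S, pr d p a l * (if a = c then 5 / 4 * (4 / 5 : ℝ) ^ D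
                else 4 / 5 * (4 / 5) ^ D) := by
              refine Finset.sum_le_sum fun a ha => mul_le_mul_of_nonneg_left ?_
                (pr_nonneg hd hp0 hp1 a l)
              split_ifs with h
              · exact hdown a ha
              · exact hup a ha h
          _ = _ := sum_split E c hcS (fun a => pr d p a l) hsum _ _
          _ ≤ _ := by nlinarith
      · calc _ ≤ ∑ a ∈ E.S, pr d p a l * (49 / 50 * (4 / 5 : ℝ) ^ D) := by
              refine Finset.sum_le_sum fun a ha => mul_le_mul_of_nonneg_left ?_
                (pr_nonneg hd hp0 hp1 a l)
              have := hup a ha (fun h => hcS (h ▸ ha))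
              linarith
          _ = _ := by rw [← Finset.sum_mul, hsum, one_mul]
    have := mul_le_mul_of_nonneg_right main (by positivity : 0 ≤ v E.S d p l * (50 / 49))
    rw [Finset.sum_mul] at this
    calc _ = _ := Finset.sum_congr rfl fun a _ => by ring
      _ ≤ _ := this
      _ = _ := by ring

theorem Ex_u [IsProbabilityMeasure P] (hd : 3 ≤ d) (hp0 : 0 ≤ p) (hp1 : p < 1)
    (E : ERW G d p Ω P) (n : ℕ) :
    Ex E n (fun l => (4 / 5 : ℝ) ^ (cayleyGraph E.S).dist 1 l.prod * v E.S d p l) ≤ 1 := by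
  induction n with
  | zero => simp [Ex_zero, v]
  | succ n ih =>
    rw [Ex_succ hd]
    exact (Ex_mono E n fun l _ hS => drift_step hd hp0 hp1 E l hS).trans ih

theorem main_bound [IsProbabilityMeasure P] (hd : 3 ≤ d) (hp0 : 0 ≤ p) (hp1 : p < 1)
    (E : ERW G d p Ω P) : ∃ C : ℝ, 0 < C ∧ ∀ n : ℕ, 1 ≤ n →
      (P {ω | E.dist n ω = 0}).toReal ≤ C / n := by
  obtain ⟨δ, c, hδ, hc, hbad⟩ := Ex_badI hd hp0 hp1 E
  have hs := summ_exp c δ hc hδ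
  have hs2 : Summable (fun n : ℕ => 2 * (d : ℝ) * Real.exp (-c * (n : ℝ) ^ δ)) := hs.mul_left _
  set T : ℝ := ∑' n : ℕ, 2 * (d : ℝ) * Real.exp (-c * (n : ℝ) ^ δ) with hT
  have hT0 : 0 ≤ T := tsum_nonneg fun n => by positivity
  have hd' : (3 : ℝ) ≤ d := by exact_mod_cast hd
  have hnb : ∀ n, Ex E n (fun l => (nb E.S d p l : ℝ)) ≤ T := by
    intro n
    rw [Ex_nb hd]
    refine le_trans (Finset.sum_le_sum fun k _ => ?_) (hs2.sum_le_tsum (Finset.range n)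
      (fun k _ => by positivity))
    rcases Nat.eq_zero_or_pos k with rfl | hk
    · rw [Ex_zero]
      have : badI E.S d p ([] : List G) ≤ 1 := by unfold badI; split_ifs <;> simp
      have : (badI E.S d p ([] : List G) : ℝ) ≤ 1 := by exact_mod_cast this
      simp [Real.zero_rpow hδ.ne']
      linarith
    · exact hbad k hk
  refine ⟨100 + 26 * T, by positivity, fun n hn => ?_⟩
  have hn' : (0 : ℝ) < n := by exact_mod_cast hn
  have step := prob_le_Ex E n {ω | E.dist n ω = 0}
    (fun l => 100 / n * ((4 / 5 : ℝ) ^ (cayleyGraph E.S).dist 1 l.prod * v E.S d p l)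
      + 26 / n * (nb E.S d p l : ℝ))
    (fun l _ _ => by have := v_pos (d := d) (p := p) E.S l; positivity) ?_
  · refine step.trans ?_
    rw [Ex_add, Ex_mul, Ex_mul]
    have h1 := mul_le_mul_of_nonneg_left (Ex_u hd hp0 hp1 E n) (by positivity : 0 ≤ 100 / (n : ℝ))
    have h2 := mul_le_mul_of_nonneg_left (hnb n) (by positivity : 0 ≤ 26 / (n : ℝ))
    refine (add_le_add h1 h2).trans (le_of_eq ?_)
    ring
  · intro ω hω
    have hlen := (mem_Ls (hist_mem E n ω)).1
    have hdist : (cayleyGraph E.S).dist 1 (hist E n ω).prod = 0 := by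
      rw [← hist_prod]; exact hω
    simp only [hdist, pow_zero, one_mul]
    generalize hist E n ω = l at *
    have hv := v_pos (d := d) (p := p) E.S l
    rcases le_or_gt n (26 * nb E.S d p l) with h | h
    · have h' : (n : ℝ) ≤ 26 * nb E.S d p l := by exact_mod_cast h
      have : 1 ≤ 26 / (n : ℝ) * nb E.S d p l := by
        rw [div_mul_eq_mul_div, le_div_iff₀ hn']; linarith
      have : 0 ≤ 100 / (n : ℝ) * v E.S d p l := by positivity
      linarith
    · have hl := v_low (d := d) (p := p) E.S l
      rw [hlen] at hl
      have h2 : (101 / 100 : ℝ) ^ (26 * nb E.S d p l) ≤ (101 / 100) ^ n :=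
        pow_le_pow_right₀ (by norm_num) h.le
      have h3 := hl.trans (mul_le_mul_of_nonneg_left h2 hv.le)
      rw [two_mul, pow_add] at h3
      have h4 : (101 / 100 : ℝ) ^ n ≤ v E.S d p l := le_of_mul_le_mul_right h3 (by positivity)
      have h5 := one_add_mul_le_pow (by norm_num : (-2 : ℝ) ≤ 1 / 100) n
      have h6 : (n : ℝ) / 100 ≤ v E.S d p l := by
        norm_num at h5 h4 ⊢
        linarith
      have : 1 ≤ 100 / (n : ℝ) * v E.S d p l := by
        rw [div_mul_eq_mul_div, le_div_iff₀ hn']; linarith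
      have : 0 ≤ 26 / (n : ℝ) * nb E.S d p l := by positivity
      linarith

end ERWaux

/-- return probability, `p ∈ [1/2, 1)` or `(p, d) = (0, 3)`:
there is `C > 0` with `P(Δ n = 0) ≤ C / n` for all `n ≥ 1`. -/
theorem erw_return_prob_linear
    {G : Type*} [Group G] [DecidableEq G] {Ω : Type*} [MeasurableSpace Ω]
    {P : Measure Ω} [IsProbabilityMeasure P]
    (d : ℕ) (hd : 3 ≤ d) (p : ℝ) (hp0 : 0 ≤ p) (hp1 : p < 1)
    (hcase : 1 / 2 ≤ p ∨ (p = 0 ∧ d = 3))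
    (E : ERW G d p Ω P) :
    ∃ C : ℝ, 0 < C ∧ ∀ n : ℕ, 1 ≤ n →
      (P {ω | E.dist n ω = 0}).toReal ≤ C / n := by
  exact ERWaux.main_bound hd hp0 hp1 E

end
end
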